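/- arXiv:2007.11300 — 2 statements merged into one kernel-verified Lean document; each statement's English description precedes it below -/
import Mathlib

section
/- Let −1 < β < 0 and ν > −1/2. Then sup_{x > 0} { ( e^{−βx} K_{ν+1}(x) / x^{ν−1} ) · ∫_0^x e^{βt} t^ν I_ν(t) dt } ≥ 1/(2(1+β)). -/
open Real MeasureTheory
/-- Modified Bessel function of the first kind, `I_ν(x) = ∑_{k} (x/2)^{ν+2k} / (Γ(ν+k+1) k!)`. -/
noncomputable def besselI (ν x : ℝ) : ℝ :=
  ∑' k : ℕ, (x / 2) ^ (ν + 2 * (k : ℝ)) / (Real.Gamma (ν + (k : ℝ) + 1) * (Nat.factorial k : ℝ))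

/-- Modified Bessel function of the second kind, `K_ν(x) = ∫_0^∞ e^{-x cosh t} cosh(ν t) dt`. -/
noncomputable def besselK (ν x : ℝ) : ℝ :=
  ∫ t in Set.Ioi (0 : ℝ), Real.exp (-x * Real.cosh t) * Real.cosh (ν * t)

/-- Lower incomplete gamma function `γ(a, x) = ∫_0^x t^{a-1} e^{-t} dt`. -/
noncomputable def lowerIncGamma (a x : ℝ) : ℝ :=
  ∫ t in (0 : ℝ)..x, t ^ (a - 1) * Real.exp (-t)

open Filter Topology Set

lemma aux_quad_le_cosh (y : ℝ) : 1 + y ^ 2 / 2 ≤ Real.cosh y := by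
  have h := sum_le_hasSum (Finset.range 2) (fun i _ => by
    rw [pow_mul]; positivity) (Real.hasSum_cosh y)
  simpa [Finset.sum_range_succ] using h

lemma aux_integrable_gauss_cosh (μ : ℝ) :
    Integrable (fun s : ℝ => Real.exp (-(s ^ 2 / 2)) * Real.cosh (μ * s)) := by
  have h1 : ∀ c : ℝ, Integrable (fun s : ℝ => Real.exp (-(s ^ 2 / 2) + c * s)) := by
    intro c
    have h := ((integrable_exp_neg_mul_sq (b := 1/2) (by norm_num)).comp_sub_right c).const_mul
      (Real.exp (c ^ 2 / 2))
    refine h.congr (Eventually.of_forall fun s => ?_)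
    simp only []
    rw [← Real.exp_add]
    congr 1
    ring
  refine (((h1 μ).add (h1 (-μ))).div_const 2).congr (Eventually.of_forall fun s => ?_)
  simp only [Pi.add_apply]
  rw [Real.cosh_eq, Real.exp_add, Real.exp_add, neg_mul]
  ring

lemma aux_K_tendsto (μ : ℝ) :
    Tendsto (fun x : ℝ => √x * Real.exp x * besselK μ x) atTop (𝓝 (√(π / 2))) := by
  have hval : ∫ s in Ioi (0 : ℝ), Real.exp (-(s ^ 2 / 2)) = √(π / 2) := by
    have h := integral_gaussian_Ioi (1/2)
    have e : (fun s : ℝ => Real.exp (-(s ^ 2 / 2))) = fun s => Real.exp (-(1/2) * s ^ 2) := by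
      ext s; congr 1; ring
    rw [e, h]
    rw [show π / (1/2) = 2 ^ 2 * (π / 2) by ring, Real.sqrt_mul (by positivity),
      Real.sqrt_sq (by norm_num)]
    ring
  have key : Tendsto (fun x : ℝ => ∫ s in Ioi (0 : ℝ),
      Real.exp (-x * (Real.cosh ((√x)⁻¹ * s) - 1)) * Real.cosh (μ * ((√x)⁻¹ * s))) atTop
      (𝓝 (∫ s in Ioi (0 : ℝ), Real.exp (-(s ^ 2 / 2)))) := by
    refine tendsto_integral_filter_of_dominated_convergence
      (fun s : ℝ => Real.exp (-(s ^ 2 / 2)) * Real.cosh (μ * s)) ?_ ?_ ?_ ?_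
    · refine Eventually.of_forall fun x => Continuous.aestronglyMeasurable ?_
      fun_prop
    · filter_upwards [eventually_ge_atTop 1] with x hx
      refine Eventually.of_forall fun s => ?_
      have hx0 : 0 < x := by linarith
      have hs1 : 1 ≤ √x := Real.one_le_sqrt.2 hx
      rw [Real.norm_of_nonneg (mul_nonneg (Real.exp_pos _).le (Real.cosh_pos _).le)]
      gcongr
      · have h := aux_quad_le_cosh ((√x)⁻¹ * s)
        have h2 : ((√x)⁻¹ * s) ^ 2 = s ^ 2 / x := by
          rw [mul_pow, inv_pow, Real.sq_sqrt hx0.le]; field_simp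
        rw [h2] at h
        have h3 : x * (s ^ 2 / x / 2) ≤ x * (Real.cosh ((√x)⁻¹ * s) - 1) := by
          gcongr; linarith
        have h4 : x * (s ^ 2 / x / 2) = s ^ 2 / 2 := by field_simp
        linarith
      · rw [Real.cosh_le_cosh, abs_mul, abs_mul, abs_mul, abs_of_pos (by positivity : 0 < (√x)⁻¹)]
        have : (√x)⁻¹ ≤ 1 := inv_le_one_of_one_le₀ hs1
        gcongr
        nlinarith [abs_nonneg s]
    · exact (aux_integrable_gauss_cosh μ).integrableOn
    · refine Eventually.of_forall fun s => ?_
      have hsq : Tendsto (fun x : ℝ => (√x)⁻¹ * s) atTop (𝓝 0) := by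
        have := (tendsto_inv_atTop_zero.comp Real.tendsto_sqrt_atTop).mul_const s
        simpa using this
      have h2 : Tendsto (fun x : ℝ => Real.cosh (μ * ((√x)⁻¹ * s))) atTop (𝓝 1) := by
        have hc : Continuous fun y : ℝ => Real.cosh (μ * y) := by fun_prop
        have := (hc.tendsto 0).comp hsq
        simpa using! this
      have hcosh : ∀ y : ℝ, Real.cosh y - 1 = 2 * Real.sinh (y / 2) ^ 2 := by
        intro y
        have := Real.cosh_two_mul (y / 2)
        rw [show 2 * (y / 2) = y by ring, Real.cosh_sq] at this
        linarith
      have hsinh : Tendsto (fun x : ℝ => √x * Real.sinh ((√x)⁻¹ * s / 2)) atTop (𝓝 (s / 2)) := by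
        have hd : HasDerivAt (fun y : ℝ => Real.sinh (y * s / 2)) (s / 2) 0 := by
          have h := ((hasDerivAt_id (0:ℝ)).mul_const s).div_const 2
          have := h.sinh
          simpa using! this
        have := hd.tendsto_slope_zero_right
        have h3 : Tendsto (fun x : ℝ => (√x)⁻¹) atTop (𝓝[>] 0) :=
          tendsto_inv_atTop_nhdsGT_zero.comp Real.tendsto_sqrt_atTop
        have := this.comp h3
        simpa [Function.comp_def] using this
      have h4 : Tendsto (fun x : ℝ => -x * (Real.cosh ((√x)⁻¹ * s) - 1)) atTop
          (𝓝 (-(s ^ 2 / 2))) := by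
        have h5 := ((hsinh.pow 2).const_mul 2).neg
        have e : -(2 * (s / 2) ^ 2) = -(s ^ 2 / 2) := by ring
        rw [e] at h5
        refine h5.congr' ?_
        filter_upwards [eventually_gt_atTop 0] with x hx
        rw [hcosh, mul_pow, Real.sq_sqrt hx.le]; ring
      have := (Real.continuous_exp.tendsto _ |>.comp h4).mul h2
      simpa using! this
  rw [hval] at key
  refine key.congr' ?_
  filter_upwards [eventually_gt_atTop 0] with x hx
  have hs : 0 < √x := Real.sqrt_pos.2 hx
  have h := integral_comp_mul_left_Ioi
    (fun t : ℝ => Real.exp (-x * (Real.cosh t - 1)) * Real.cosh (μ * t)) 0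
    (inv_pos.2 hs)
  rw [h, mul_zero, inv_inv, smul_eq_mul, mul_assoc]
  congr 1
  rw [besselK, ← integral_const_mul]
  congr 1
  ext t
  rw [← mul_assoc, ← Real.exp_add]
  congr 2
  ring

lemma aux_K_nonneg (μ x : ℝ) : 0 ≤ besselK μ x := by
  refine integral_nonneg fun t => ?_
  exact mul_nonneg (Real.exp_pos _).le (Real.cosh_pos _).le

lemma aux_K_bound (μ : ℝ) (hμ : 0 < μ) :
    ∃ C : ℝ, 0 ≤ C ∧ ∀ x : ℝ, 0 < x → besselK μ x ≤ C * x ^ (-μ) := by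
  refine ⟨2 ^ μ * Real.Gamma μ, by positivity, fun x hx => ?_⟩
  have hG := Real.integral_rpow_mul_exp_neg_mul_Ioi hμ (half_pos hx)
  have hI : IntegrableOn (fun u : ℝ => u ^ (μ - 1) * Real.exp (-(x / 2 * u))) (Ioi 0) := by
    by_contra hcon
    have : ∫ u in Ioi (0:ℝ), u ^ (μ - 1) * Real.exp (-(x / 2 * u)) = 0 :=
      integral_undef hcon
    rw [this] at hG
    have : 0 < (1 / (x / 2)) ^ μ * Real.Gamma μ := by
      have := Real.Gamma_pos_of_pos hμ
      positivity
    linarith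
  have him : Real.exp '' univ = Ioi 0 := by rw [image_univ, Real.range_exp]
  rw [← him] at hI hG
  rw [integrableOn_image_iff_integrableOn_abs_deriv_smul MeasurableSet.univ
    (fun t _ => (Real.hasDerivAt_exp t).hasDerivWithinAt) Real.exp_injective.injOn] at hI
  rw [integral_image_eq_integral_abs_deriv_smul MeasurableSet.univ
    (fun t _ => (Real.hasDerivAt_exp t).hasDerivWithinAt) Real.exp_injective.injOn] at hG
  rw [integrableOn_univ] at hI
  rw [setIntegral_univ] at hG
  have e : (1 / (x / 2)) ^ μ * Real.Gamma μ = 2 ^ μ * Real.Gamma μ * x ^ (-μ) := by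
    rw [show 1 / (x / 2) = 2 / x by field_simp, Real.div_rpow (by norm_num) hx.le,
      Real.rpow_neg hx.le]
    ring
  rw [← e, ← hG]
  refine le_trans ?_ (setIntegral_le_integral (s := Ioi 0) hI
    (Eventually.of_forall fun t => ?_))
  · refine integral_mono_of_nonneg (Eventually.of_forall fun t => ?_) hI.integrableOn ?_
    · exact mul_nonneg (Real.exp_pos _).le (Real.cosh_pos _).le
    · refine (ae_restrict_iff' measurableSet_Ioi).2 (Eventually.of_forall fun t ht => ?_)
      have ht : 0 < t := ht
      simp only [smul_eq_mul]
      rw [abs_of_pos (Real.exp_pos t), ← mul_assoc, ← Real.exp_mul, ← Real.exp_add,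
        mul_comm (Real.exp (-x * _))]
      have h1 : Real.cosh (μ * t) ≤ Real.exp (t + t * (μ - 1)) := by
        rw [Real.cosh_eq, show t + t * (μ - 1) = μ * t by ring]
        have : Real.exp (-(μ * t)) ≤ Real.exp (μ * t) :=
          Real.exp_le_exp.2 (by nlinarith [mul_pos hμ ht])
        linarith
      have h2 : Real.exp (-x * Real.cosh t) ≤ Real.exp (-(x / 2 * Real.exp t)) := by
        apply Real.exp_le_exp.2
        rw [Real.cosh_eq]
        nlinarith [mul_pos hx (Real.exp_pos (-t))]
      exact mul_le_mul h1 h2 (Real.exp_pos _).le (Real.exp_pos _).le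
  · simp only [smul_eq_mul, Pi.zero_apply]
    positivity

lemma aux_beta (p q : ℝ) (hp : 0 < p) (hq : 0 < q) :
    ∫ v in Ioo (0:ℝ) 1, v ^ (p - 1) * (1 - v) ^ (q - 1) =
      Real.Gamma p * Real.Gamma q / Real.Gamma (p + q) := by
  have h := ProbabilityTheory.beta_eq_betaIntegralReal p q hp hq
  rw [ProbabilityTheory.beta] at h
  rw [h, Complex.betaIntegral]
  have e : ∫ x in (0:ℝ)..1, (x:ℂ) ^ ((p:ℂ) - 1) * (1 - (x:ℂ)) ^ ((q:ℂ) - 1) =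
      ((∫ x in (0:ℝ)..1, x ^ (p - 1) * (1 - x) ^ (q - 1) : ℝ) : ℂ) := by
    rw [← intervalIntegral.integral_ofReal]
    refine intervalIntegral.integral_congr fun x hx => ?_
    rw [uIcc_of_le zero_le_one] at hx
    rw [Complex.ofReal_mul, Complex.ofReal_cpow hx.1, Complex.ofReal_cpow (by linarith [hx.2])]
    push_cast
    rfl
  rw [e, Complex.ofReal_re, intervalIntegral.integral_of_le zero_le_one, integral_Ioc_eq_integral_Ioo]

lemma aux_moment (a : ℝ) (ha : -1 < a) (k : ℕ) :
    ∫ u in Ioo (0:ℝ) 1, (1 - u ^ 2) ^ a * u ^ (2 * k) =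
      Real.Gamma (k + 1 / 2) * Real.Gamma (a + 1) / (2 * Real.Gamma (a + k + 3 / 2)) := by
  have hk : (0:ℝ) < k + 1/2 := by positivity
  have hB := aux_beta (k + 1/2) (a + 1) hk (by linarith)
  have hc := integral_comp_rpow_Ioi_of_pos
    (g := (Ioo (0:ℝ) 1).indicator fun v : ℝ => v ^ ((k:ℝ) + 1/2 - 1) * (1 - v) ^ (a + 1 - 1))
    (p := 2) (by norm_num)
  have hsub : Ioi (0:ℝ) ∩ Ioo 0 1 = Ioo 0 1 := by ext; simp
  rw [setIntegral_indicator measurableSet_Ioo, hsub, hB] at hc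
  have hl : ∫ x in Ioi (0:ℝ), (2 * x ^ ((2:ℝ) - 1)) • (Ioo (0:ℝ) 1).indicator
      (fun v : ℝ => v ^ ((k:ℝ) + 1/2 - 1) * (1 - v) ^ (a + 1 - 1)) (x ^ (2:ℝ)) =
      ∫ x in Ioi (0:ℝ), (Ioo (0:ℝ) 1).indicator
        (fun u : ℝ => 2 * ((1 - u ^ 2) ^ a * u ^ (2 * k))) x := by
    refine setIntegral_congr_fun measurableSet_Ioi fun x hx => ?_
    have hx : 0 < x := hx
    simp only [smul_eq_mul]
    rw [Real.rpow_two]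
    by_cases h1 : x < 1
    · rw [indicator_of_mem (by constructor <;> nlinarith), indicator_of_mem (by exact ⟨hx, h1⟩)]
      have e1 : x ^ ((2:ℝ) - 1) * (x ^ 2) ^ ((k:ℝ) + 1/2 - 1) = x ^ (2 * k) := by
        rw [← Real.rpow_two, ← Real.rpow_mul hx.le, ← Real.rpow_add hx, ← Real.rpow_natCast]
        congr 1
        push_cast
        ring
      rw [← e1, add_sub_cancel_right]
      ring
    · rw [indicator_of_notMem, indicator_of_notMem]
      · simp
      · exact fun h => h1 h.2
      · intro h
        have := h.2
        nlinarith
  rw [hl, setIntegral_indicator measurableSet_Ioo, hsub, integral_const_mul] at hc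
  rw [show a + k + 3 / 2 = k + 1 / 2 + (a + 1) by ring, mul_comm (2:ℝ), ← div_div, ← hc]
  ring

lemma aux_moment_integrable (a : ℝ) (ha : -1 < a) :
    IntegrableOn (fun u : ℝ => (1 - u ^ 2) ^ a) (Ioo 0 1) := by
  have h := aux_moment a ha 0
  simp only [mul_zero, pow_zero, mul_one] at h
  by_contra hcon
  rw [integral_undef hcon] at h
  have h1 : 0 < Real.Gamma (((0:ℕ):ℝ) + 1 / 2) := Real.Gamma_pos_of_pos (by norm_num)
  have h2 : 0 < Real.Gamma (a + 1) := Real.Gamma_pos_of_pos (by linarith)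
  have h3 : 0 < Real.Gamma (a + ((0:ℕ):ℝ) + 3 / 2) := Real.Gamma_pos_of_pos (by push_cast; linarith)
  have : 0 < Real.Gamma (((0:ℕ):ℝ) + 1 / 2) * Real.Gamma (a + 1) /
    (2 * Real.Gamma (a + ((0:ℕ):ℝ) + 3 / 2)) := by positivity
  linarith

noncomputable def auxP (a x : ℝ) : ℝ := ∫ u in Ioo (0:ℝ) 1, (1 - u ^ 2) ^ a * Real.cosh (x * u)

lemma aux_Gamma_half (k : ℕ) :
    Real.Gamma (k + 1/2) * (4 ^ k * (Nat.factorial k : ℝ)) = (Nat.factorial (2 * k) : ℝ) * √π := by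
  induction k with
  | zero =>
    have := Real.Gamma_one_half_eq
    simp at this ⊢
    exact this
  | succ n ih =>
    have e : ((n + 1 : ℕ) : ℝ) + 1/2 = (n + 1/2) + 1 := by push_cast; ring
    rw [e, Real.Gamma_add_one (by positivity), show 2 * (n + 1) = 2 * n + 1 + 1 by ring,
      Nat.factorial_succ, Nat.factorial_succ, Nat.factorial_succ]
    push_cast
    linear_combination (2 * (n:ℝ) + 1) * (2 * n + 2) * ih

lemma aux_I_eq (ν x : ℝ) (hν : -(1/2) < ν) (hx : 0 < x) :
    besselI ν x = (x / 2) ^ ν * (2 / (√π * Real.Gamma (ν + 1/2))) * auxP (ν - 1/2) x := by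
  have ha : -1 < ν - 1/2 := by linarith
  have hW := aux_moment_integrable (ν - 1/2) ha
  have hs : HasSum (fun k : ℕ => ∫ u in Ioo (0:ℝ) 1,
      (1 - u ^ 2) ^ (ν - 1/2) * ((x * u) ^ (2 * k) / (Nat.factorial (2 * k) : ℝ)))
      (auxP (ν - 1/2) x) := by
    refine hasSum_integral_of_dominated_convergence
      (fun (k : ℕ) (u : ℝ) => (1 - u ^ 2) ^ (ν - 1/2) * (x ^ (2 * k) / (Nat.factorial (2 * k) : ℝ)))
      ?_ ?_ ?_ ?_ ?_
    · intro k
      exact Measurable.aestronglyMeasurable (by fun_prop)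
    · intro k
      refine (ae_restrict_iff' measurableSet_Ioo).2 (Eventually.of_forall fun u hu => ?_)
      have h1 : 0 ≤ 1 - u ^ 2 := by nlinarith [hu.1, hu.2]
      have h0 := hu.1
      rw [Real.norm_of_nonneg (by positivity)]
      have : x * u ≤ x := by nlinarith [hu.2]
      gcongr
    · exact Eventually.of_forall fun u => (Real.hasSum_cosh x).summable.mul_left _
    · simp_rw [tsum_mul_left]
      exact hW.mul_const _
    · exact Eventually.of_forall fun u => (Real.hasSum_cosh (x * u)).mul_left _
  have h2 := hs.mul_left ((x / 2) ^ ν * (2 / (√π * Real.Gamma (ν + 1/2))))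
  rw [← h2.tsum_eq, besselI]
  congr 1
  ext k
  have e : ∀ u : ℝ, (1 - u ^ 2) ^ (ν - 1/2) * ((x * u) ^ (2 * k) / (Nat.factorial (2 * k) : ℝ)) =
      (x ^ (2 * k) / (Nat.factorial (2 * k) : ℝ)) * ((1 - u ^ 2) ^ (ν - 1/2) * u ^ (2 * k)) := by
    intro u; rw [mul_pow]; ring
  simp_rw [e]
  rw [integral_const_mul, aux_moment _ ha, Real.rpow_add (by positivity),
    show 2 * (k:ℝ) = ((2 * k : ℕ) : ℝ) by push_cast; ring, Real.rpow_natCast, div_pow,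
    show ν - 1/2 + 1 = ν + 1/2 by ring, show ν - 1/2 + k + 3/2 = ν + k + 1 by ring]
  have g1 : 0 < Real.Gamma (ν + 1/2) := Real.Gamma_pos_of_pos (by linarith)
  have g2 : 0 < Real.Gamma (ν + k + 1) := Real.Gamma_pos_of_pos (by
    have : (0:ℝ) ≤ k := by positivity
    linarith)
  have g3 := aux_Gamma_half k
  have g4 : 0 < √π := by positivity
  have g5 : (0:ℝ) < (Nat.factorial k : ℝ) := by positivity
  have g6 : (0:ℝ) < (Nat.factorial (2 * k) : ℝ) := by positivity
  have g7 : Real.Gamma (k + 1/2) =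
      (Nat.factorial (2 * k) : ℝ) * √π / (4 ^ k * (Nat.factorial k : ℝ)) := by
    rw [eq_div_iff (by positivity), g3]
  rw [g7, pow_mul (2:ℝ), show (2:ℝ) ^ 2 = 4 by norm_num]
  clear g7 g3
  generalize Real.Gamma (ν + 1/2) = G at g1 ⊢
  field_simp

lemma aux_P_nonneg (a x : ℝ) : 0 ≤ auxP a x := by
  refine setIntegral_nonneg measurableSet_Ioo fun u hu => ?_
  have h1 : 0 ≤ 1 - u ^ 2 := by nlinarith [hu.1, hu.2]
  exact mul_nonneg (Real.rpow_nonneg h1 _) (Real.cosh_pos _).le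

lemma aux_P_measurable (a : ℝ) : Measurable (auxP a) := by
  have : StronglyMeasurable (fun z : ℝ × ℝ => (1 - z.2 ^ 2) ^ a * Real.cosh (z.1 * z.2)) := by
    apply Measurable.stronglyMeasurable
    fun_prop
  exact (this.integral_prod_right' (ν := volume.restrict (Ioo (0:ℝ) 1))).measurable

lemma aux_P_bound (a : ℝ) (ha : -1 < a) :
    ∃ C : ℝ, 0 ≤ C ∧ ∀ x : ℝ, 0 < x → auxP a x ≤ C * Real.exp x := by
  refine ⟨∫ u in Ioo (0:ℝ) 1, (1 - u ^ 2) ^ a, ?_, fun x hx => ?_⟩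
  · refine setIntegral_nonneg measurableSet_Ioo fun u hu => ?_
    have h1 : 0 ≤ 1 - u ^ 2 := by nlinarith [hu.1, hu.2]
    positivity
  · rw [← integral_mul_const]
    refine integral_mono_of_nonneg ?_ ((aux_moment_integrable a ha).mul_const _) ?_
    · refine (ae_restrict_iff' measurableSet_Ioo).2 (Eventually.of_forall fun u hu => ?_)
      have h1 : 0 ≤ 1 - u ^ 2 := by nlinarith [hu.1, hu.2]
      exact mul_nonneg (Real.rpow_nonneg h1 _) (Real.cosh_pos _).le
    · refine (ae_restrict_iff' measurableSet_Ioo).2 (Eventually.of_forall fun u hu => ?_)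
      have h1 : 0 ≤ 1 - u ^ 2 := by nlinarith [hu.1, hu.2]
      have h2 : Real.cosh (x * u) ≤ Real.exp x := by
        rw [Real.cosh_eq]
        have : Real.exp (x * u) ≤ Real.exp x := Real.exp_le_exp.2 (by nlinarith [hu.2])
        have : Real.exp (-(x * u)) ≤ Real.exp x := Real.exp_le_exp.2 (by nlinarith [hu.1])
        linarith
      exact mul_le_mul_of_nonneg_left h2 (Real.rpow_nonneg h1 _)

noncomputable def auxG (a x w : ℝ) : ℝ :=
  (Iic x).indicator (fun w => w ^ a * (2 - w / x) ^ a * ((Real.exp (-w) + Real.exp (w - 2 * x)) / 2)) w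

lemma aux_P_eq (a x : ℝ) (hx : 0 < x) :
    Real.exp (-x) * x ^ (a + 1) * auxP a x = ∫ w in Ioi (0:ℝ), auxG a x w := by
  have hsub := intervalIntegral.integral_comp_sub_div (a := 0) (b := x)
    (fun u : ℝ => (1 - u ^ 2) ^ a * Real.cosh (x * u)) hx.ne' 1
  rw [div_self hx.ne', zero_div, sub_self, sub_zero,
    intervalIntegral.integral_of_le zero_le_one, integral_Ioc_eq_integral_Ioo,
    intervalIntegral.integral_of_le hx.le, smul_eq_mul] at hsub
  change _ = x * auxP a x at hsub
  rw [Real.rpow_add_one hx.ne', show Real.exp (-x) * (x ^ a * x) * auxP a x =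
    Real.exp (-x) * x ^ a * (x * auxP a x) by ring, ← hsub, ← integral_const_mul]
  unfold auxG
  rw [setIntegral_indicator measurableSet_Iic, Ioi_inter_Iic]
  refine setIntegral_congr_fun measurableSet_Ioc fun w hw => ?_
  have hw0 : 0 < w := hw.1
  have hw1 : w / x ≤ 1 := (div_le_one hx).2 hw.2
  have e1 : 1 - (1 - w / x) ^ 2 = w * (2 - w / x) / x := by field_simp; ring
  rw [e1, Real.div_rpow (by apply mul_nonneg <;> linarith) hx.le,
    Real.mul_rpow hw0.le (by linarith), Real.cosh_eq,
    show x * (1 - w / x) = x - w by field_simp,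
    show -w = -x + (x - w) by ring, show w - 2 * x = -x + (-(x - w)) by ring,
    Real.exp_add, Real.exp_add]
  have : x ^ a ≠ 0 := by positivity
  field_simp

lemma aux_rpow_bound (a y c : ℝ) (hc : 0 < c) (h1 : min 1 c ≤ y) (h2 : y ≤ max 1 c) :
    y ^ a ≤ 1 + c ^ a := by
  have hm : 0 < min 1 c := lt_min one_pos hc
  have hy : 0 < y := by linarith
  have hca : 0 < c ^ a := by positivity
  rcases le_total 0 a with h | h
  · have : y ^ a ≤ (max 1 c) ^ a := Real.rpow_le_rpow hy.le h2 h
    rcases le_total 1 c with h3 | h3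
    · rw [max_eq_right h3] at this; linarith
    · rw [max_eq_left h3, Real.one_rpow] at this; linarith
  · have : y ^ a ≤ (min 1 c) ^ a := Real.rpow_le_rpow_of_nonpos hm h1 h
    rcases le_total 1 c with h3 | h3
    · rw [min_eq_left h3, Real.one_rpow] at this; linarith
    · rw [min_eq_right h3] at this; linarith

lemma aux_G_bound (a x w : ℝ) (hx : 0 < x) (hw : 0 < w) :
    0 ≤ auxG a x w ∧ auxG a x w ≤ (1 + 2 ^ a) * (Real.exp (-w) * w ^ a) := by
  unfold auxG
  by_cases h : w ≤ x
  · rw [indicator_of_mem (by exact h)]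
    have hw1 : w / x ≤ 1 := (div_le_one hx).2 h
    have hw2 : 0 < w / x := by positivity
    have h0 : 0 ≤ 2 - w / x := by linarith
    refine ⟨by positivity, ?_⟩
    have h1 : (2 - w / x) ^ a ≤ 1 + 2 ^ a :=
      aux_rpow_bound a _ 2 (by norm_num) (by norm_num; linarith) (by norm_num; linarith)
    have h2 : (Real.exp (-w) + Real.exp (w - 2 * x)) / 2 ≤ Real.exp (-w) := by
      have : Real.exp (w - 2 * x) ≤ Real.exp (-w) := Real.exp_le_exp.2 (by linarith)
      linarith
    calc _ ≤ w ^ a * (1 + 2 ^ a) * Real.exp (-w) := by gcongr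
      _ = _ := by ring
  · rw [indicator_of_notMem (by exact h)]
    exact ⟨le_rfl, by positivity⟩

lemma aux_G_integrable (a : ℝ) (ha : -1 < a) :
    IntegrableOn (fun w : ℝ => (1 + 2 ^ a) * (Real.exp (-w) * w ^ a)) (Ioi 0) := by
  have := Real.GammaIntegral_convergent (s := a + 1) (by linarith)
  rw [add_sub_cancel_right] at this
  exact this.const_mul _

lemma aux_Q_bound (a : ℝ) (ha : -1 < a) :
    ∃ C : ℝ, 0 ≤ C ∧ ∀ x : ℝ, 0 < x → Real.exp (-x) * x ^ (a + 1) * auxP a x ≤ C := by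
  refine ⟨∫ w in Ioi (0:ℝ), (1 + 2 ^ a) * (Real.exp (-w) * w ^ a), ?_, fun x hx => ?_⟩
  · refine setIntegral_nonneg measurableSet_Ioi fun w hw => ?_
    have hw : 0 < w := hw
    positivity
  · rw [aux_P_eq a x hx]
    refine integral_mono_of_nonneg ?_ (aux_G_integrable a ha) ?_
    · exact (ae_restrict_iff' measurableSet_Ioi).2 (Eventually.of_forall fun w hw =>
        (aux_G_bound a x w hx hw).1)
    · exact (ae_restrict_iff' measurableSet_Ioi).2 (Eventually.of_forall fun w hw =>
        (aux_G_bound a x w hx hw).2)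

lemma aux_Q_tendsto (a : ℝ) (ha : -1 < a) :
    Tendsto (fun x : ℝ => Real.exp (-x) * x ^ (a + 1) * auxP a x) atTop
      (𝓝 (2 ^ a / 2 * Real.Gamma (a + 1))) := by
  have hval : ∫ w in Ioi (0:ℝ), 2 ^ a / 2 * (Real.exp (-w) * w ^ a) =
      2 ^ a / 2 * Real.Gamma (a + 1) := by
    rw [integral_const_mul, Real.Gamma_eq_integral (by linarith), add_sub_cancel_right]
  rw [← hval]
  have key : Tendsto (fun x : ℝ => ∫ w in Ioi (0:ℝ), auxG a x w) atTop
      (𝓝 (∫ w in Ioi (0:ℝ), 2 ^ a / 2 * (Real.exp (-w) * w ^ a))) := by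
    refine tendsto_integral_filter_of_dominated_convergence
      (fun w : ℝ => (1 + 2 ^ a) * (Real.exp (-w) * w ^ a)) ?_ ?_ (aux_G_integrable a ha) ?_
    · refine Eventually.of_forall fun x => Measurable.aestronglyMeasurable ?_
      unfold auxG
      exact Measurable.indicator (by fun_prop) measurableSet_Iic
    · filter_upwards [eventually_gt_atTop 0] with x hx
      refine (ae_restrict_iff' measurableSet_Ioi).2 (Eventually.of_forall fun w hw => ?_)
      rw [Real.norm_of_nonneg (aux_G_bound a x w hx hw).1]
      exact (aux_G_bound a x w hx hw).2
    · refine (ae_restrict_iff' measurableSet_Ioi).2 (Eventually.of_forall fun w hw => ?_)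
      have h1 : Tendsto (fun x : ℝ => (2 - w / x) ^ a) atTop (𝓝 (2 ^ a)) := by
        have h : Tendsto (fun x : ℝ => 2 - w / x) atTop (𝓝 (2 - 0)) :=
          tendsto_const_nhds.sub (tendsto_const_nhds.div_atTop tendsto_id)
        rw [sub_zero] at h
        exact h.rpow_const (Or.inl (by norm_num))
      have h2 : Tendsto (fun x : ℝ => Real.exp (w - 2 * x)) atTop (𝓝 0) := by
        refine Real.tendsto_exp_atBot.comp ?_
        have := tendsto_atBot_add_const_left atTop w
          (tendsto_neg_atTop_atBot.comp (tendsto_id.const_mul_atTop (two_pos (α := ℝ))))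
        simpa [sub_eq_add_neg] using! this
      have h3 := (h1.const_mul (w ^ a)).mul ((h2.const_add (Real.exp (-w))).div_const 2)
      have e : w ^ a * 2 ^ a * ((Real.exp (-w) + 0) / 2) =
        2 ^ a / 2 * (Real.exp (-w) * w ^ a) := by ring
      rw [e] at h3
      refine h3.congr' ?_
      filter_upwards [eventually_ge_atTop w] with x hx
      unfold auxG
      rw [indicator_of_mem (by exact hx)]
  refine key.congr' ?_
  filter_upwards [eventually_gt_atTop 0] with x hx
  rw [aux_P_eq a x hx]

lemma aux_intervalIntegrable (a b C : ℝ) (q : ℝ → ℝ) (ha : -1 < a) (hb : 0 < b)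
    (hq : Measurable q) (hC : ∀ t, 0 < t → |q t| ≤ C) (c d : ℝ) (hc : 0 ≤ c) (hd : c ≤ d) :
    IntervalIntegrable (fun t : ℝ => Real.exp (b * t) * t ^ a * q t) volume c d := by
  have h1 : IntervalIntegrable (fun t : ℝ => t ^ a) volume c d :=
    intervalIntegral.intervalIntegrable_rpow' ha
  have h2 := h1.const_mul (Real.exp (b * d) * C)
  refine h2.mono_fun' (Measurable.aestronglyMeasurable (by fun_prop)) ?_
  refine (ae_restrict_iff' measurableSet_uIoc).2 (Eventually.of_forall fun t ht => ?_)
  rw [uIoc_of_le hd] at ht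
  have ht0 : 0 < t := lt_of_le_of_lt hc ht.1
  simp only []
  rw [Real.norm_eq_abs, abs_mul, abs_of_pos (by positivity)]
  have h3 := hC t ht0
  have h4 : Real.exp (b * t) ≤ Real.exp (b * d) :=
    Real.exp_le_exp.2 (mul_le_mul_of_nonneg_left ht.2 hb.le)
  calc _ ≤ Real.exp (b * d) * t ^ a * C := by gcongr
    _ = _ := by ring

lemma aux_int_tendsto (a b C L : ℝ) (q : ℝ → ℝ) (ha : -1 < a) (hb : 0 < b)
    (hq : Measurable q) (hC : ∀ t, 0 < t → |q t| ≤ C) (hL : Tendsto q atTop (𝓝 L)) :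
    Tendsto (fun x : ℝ => Real.exp (-(b * x)) * x ^ (-a) *
      ∫ t in (0:ℝ)..x, Real.exp (b * t) * t ^ a * q t) atTop (𝓝 (L / b)) := by
  have hC0 : 0 ≤ C := (abs_nonneg _).trans (hC 1 one_pos)
  -- first half
  have hA : Tendsto (fun x : ℝ => Real.exp (-(b * x)) * x ^ (-a) *
      ∫ t in (0:ℝ)..(x / 2), Real.exp (b * t) * t ^ a * q t) atTop (𝓝 0) := by
    have h0 : Tendsto (fun x : ℝ => (C * (1 / 2) ^ (a + 1) / (a + 1)) *
        (x ^ (1:ℝ) * Real.exp (-(b / 2) * x))) atTop (𝓝 0) := by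
      have := (tendsto_rpow_mul_exp_neg_mul_atTop_nhds_zero 1 (b / 2) (by positivity)).const_mul
        (C * (1 / 2) ^ (a + 1) / (a + 1))
      simpa using this
    refine squeeze_zero_norm' ?_ h0
    filter_upwards [eventually_gt_atTop 0] with x hx
    rw [norm_mul, Real.norm_of_nonneg (by positivity)]
    have h1 : ‖∫ t in (0:ℝ)..(x / 2), Real.exp (b * t) * t ^ a * q t‖ ≤
        ∫ t in (0:ℝ)..(x / 2), (Real.exp (b * (x / 2)) * C) * t ^ a := by
      refine intervalIntegral.norm_integral_le_of_norm_le (by positivity)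
        (Eventually.of_forall fun t ht => ?_)
        ((intervalIntegral.intervalIntegrable_rpow' ha).const_mul _)
      have ht0 : 0 < t := ht.1
      rw [Real.norm_eq_abs, abs_mul, abs_of_pos (by positivity)]
      have h3 := hC t ht0
      have h4 : Real.exp (b * t) ≤ Real.exp (b * (x / 2)) :=
        Real.exp_le_exp.2 (mul_le_mul_of_nonneg_left ht.2 hb.le)
      calc _ ≤ Real.exp (b * (x / 2)) * t ^ a * C := by gcongr
        _ = _ := by ring
    rw [intervalIntegral.integral_const_mul, integral_rpow (Or.inl ha),
      Real.zero_rpow (by linarith), sub_zero] at h1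
    calc _ ≤ Real.exp (-(b * x)) * x ^ (-a) *
          (Real.exp (b * (x / 2)) * C * ((x / 2) ^ (a + 1) / (a + 1))) := by gcongr
      _ = _ := by
        have hx1 : x ^ (1:ℝ) = x ^ (-a) * x ^ (a + 1) := by
          rw [← Real.rpow_add hx]; congr 1; ring
        rw [hx1, show x / 2 = (1 / 2) * x by ring, Real.mul_rpow (by norm_num) hx.le,
          show -(b / 2) * x = -(b * x) + b * (1 / 2 * x) by ring, Real.exp_add]
        ring
  -- second half
  have hB : Tendsto (fun x : ℝ => Real.exp (-(b * x)) * x ^ (-a) *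
      ∫ t in (x / 2)..x, Real.exp (b * t) * t ^ a * q t) atTop (𝓝 (L / b)) := by
    have hval : ∫ w in Ioi (0:ℝ), Real.exp (-b * w) * L = L / b := by
      rw [integral_mul_const, integral_exp_mul_Ioi (by linarith)]
      simp
      ring
    have hexp : IntegrableOn (fun w : ℝ => Real.exp (-b * w)) (Ioi 0) :=
      exp_neg_integrableOn_Ioi 0 hb
    have key : Tendsto (fun x : ℝ => ∫ w in Ioi (0:ℝ), (Iic (x / 2)).indicator
        (fun w => Real.exp (-b * w) * (1 - w / x) ^ a * q (x - w)) w) atTop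
        (𝓝 (∫ w in Ioi (0:ℝ), Real.exp (-b * w) * L)) := by
      refine tendsto_integral_filter_of_dominated_convergence
        (fun w : ℝ => Real.exp (-b * w) * ((1 + (1 / 2) ^ a) * C)) ?_ ?_ (hexp.mul_const _) ?_
      · refine Eventually.of_forall fun x => Measurable.aestronglyMeasurable ?_
        exact Measurable.indicator (by fun_prop) measurableSet_Iic
      · filter_upwards [eventually_gt_atTop 0] with x hx
        refine (ae_restrict_iff' measurableSet_Ioi).2 (Eventually.of_forall fun w hw => ?_)
        have hw : 0 < w := hw
        by_cases h : w ≤ x / 2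
        · rw [indicator_of_mem (by exact h)]
          have h1 : w / x ≤ 1 / 2 := by rw [div_le_iff₀ hx]; linarith
          have h2 : 0 < w / x := by positivity
          have h3 : 0 ≤ 1 - w / x := by linarith
          have h4 : (1 - w / x) ^ a ≤ 1 + (1 / 2) ^ a :=
            aux_rpow_bound a _ (1 / 2) (by norm_num) (by norm_num; linarith)
              (by norm_num; linarith)
          have h5 := hC (x - w) (by linarith)
          rw [Real.norm_eq_abs, abs_mul, abs_of_nonneg (by positivity), mul_assoc]
          gcongr
        · rw [indicator_of_notMem (by exact h), norm_zero]
          positivity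
      · refine (ae_restrict_iff' measurableSet_Ioi).2 (Eventually.of_forall fun w hw => ?_)
        have h1 : Tendsto (fun x : ℝ => (1 - w / x) ^ a) atTop (𝓝 1) := by
          have h : Tendsto (fun x : ℝ => 1 - w / x) atTop (𝓝 (1 - 0)) :=
            tendsto_const_nhds.sub (tendsto_const_nhds.div_atTop tendsto_id)
          rw [sub_zero] at h
          simpa using h.rpow_const (p := a) (Or.inl (by norm_num))
        have h2 : Tendsto (fun x : ℝ => q (x - w)) atTop (𝓝 L) :=
          hL.comp (tendsto_atTop_add_const_right atTop (-w) tendsto_id)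
        have h3 := (h1.const_mul (Real.exp (-b * w))).mul h2
        rw [mul_one] at h3
        refine h3.congr' ?_
        filter_upwards [eventually_ge_atTop (2 * w)] with x hx
        rw [indicator_of_mem (by simp only [mem_Iic]; linarith)]
    rw [hval] at key
    refine key.congr' ?_
    filter_upwards [eventually_gt_atTop 0] with x hx
    have hsub := intervalIntegral.integral_comp_sub_left (a := 0) (b := x / 2)
      (fun t : ℝ => Real.exp (b * t) * t ^ a * q t) x
    rw [sub_zero, show x - x / 2 = x / 2 by ring] at hsub
    rw [← hsub, intervalIntegral.integral_of_le (by positivity), ← integral_const_mul,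
      setIntegral_indicator measurableSet_Iic, Ioi_inter_Iic]
    refine setIntegral_congr_fun measurableSet_Ioc fun w hw => ?_
    have hw2 : w ≤ x / 2 := hw.2
    
    rw [show 1 - w / x = (x - w) / x by field_simp, Real.div_rpow (by linarith) hx.le,
      Real.rpow_neg hx.le, show -b * w = -(b * x) + b * (x - w) by ring, Real.exp_add]
    ring
  have := hA.add hB
  rw [zero_add] at this
  refine this.congr' ?_
  filter_upwards [eventually_gt_atTop 0] with x hx
  rw [← mul_add, intervalIntegral.integral_add_adjacent_intervals]
  · exact aux_intervalIntegrable a b C q ha hb hq hC _ _ le_rfl (by positivity)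
  · exact aux_intervalIntegrable a b C q ha hb hq hC _ _ (by positivity) (by linarith)

lemma aux_main_tendsto (β ν : ℝ) (hβ0 : -1 < β) (hν : -(1/2) < ν) :
    Tendsto (fun x : ℝ => (Real.exp (-β * x) * besselK (ν + 1) x / x ^ (ν - 1)) *
        ∫ t in (0 : ℝ)..x, Real.exp (β * t) * t ^ ν * besselI ν t) atTop
      (𝓝 (1 / (2 * (1 + β)))) := by
  have ha : -1 < ν - 1/2 := by linarith
  have hb : 0 < 1 + β := by linarith
  have hG : 0 < Real.Gamma (ν + 1/2) := Real.Gamma_pos_of_pos (by linarith)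
  have hpi : 0 < √π := by positivity
  obtain ⟨c, hc⟩ : ∃ c : ℝ, c = (2 / (√π * Real.Gamma (ν + 1/2))) / 2 ^ ν := ⟨_, rfl⟩
  have hc0 : 0 < c := by rw [hc]; positivity
  obtain ⟨C, hC0, hC⟩ := aux_Q_bound (ν - 1/2) ha
  have hT := aux_Q_tendsto (ν - 1/2) ha
  have hJ := aux_int_tendsto (ν - 1/2) (1 + β) (C * c) _
    (fun t => Real.exp (-t) * t ^ (ν - 1/2 + 1) * auxP (ν - 1/2) t * c) ha hb
    (by have := aux_P_measurable (ν - 1/2); fun_prop)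
    (fun t ht => by
      have := aux_P_nonneg (ν - 1/2) t
      rw [abs_of_nonneg (by positivity)]
      have := hC t ht
      gcongr) (hT.mul_const c)
  have hF := (aux_K_tendsto (ν + 1)).mul hJ
  have e : √(π / 2) * (2 ^ (ν - 1/2) / 2 * Real.Gamma (ν - 1/2 + 1) * c / (1 + β)) =
      1 / (2 * (1 + β)) := by
    rw [show ν - 1/2 + 1 = ν + 1/2 by ring, hc, Real.rpow_sub (by norm_num),
      ← Real.sqrt_eq_rpow, Real.sqrt_div (by positivity)]
    have h2 : √2 * √2 = (2:ℝ) := Real.mul_self_sqrt (by norm_num)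
    have h2' : 0 < √(2:ℝ) := by positivity
    have h3 : (0:ℝ) < 2 ^ ν := by positivity
    generalize Real.Gamma (ν + 1/2) = G at hG ⊢
    field_simp
    linarith
  rw [e] at hF
  refine hF.congr' ?_
  filter_upwards [eventually_gt_atTop 0] with x hx
  have hi : ∫ t in (0 : ℝ)..x, Real.exp (β * t) * t ^ ν * besselI ν t =
      ∫ t in (0 : ℝ)..x, Real.exp ((1 + β) * t) * t ^ (ν - 1/2) *
        (Real.exp (-t) * t ^ (ν - 1/2 + 1) * auxP (ν - 1/2) t * c) := by
    rw [intervalIntegral.integral_of_le hx.le, intervalIntegral.integral_of_le hx.le]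
    refine setIntegral_congr_fun measurableSet_Ioc fun t ht => ?_
    have ht0 : 0 < t := ht.1
    rw [aux_I_eq ν t hν ht0, Real.div_rpow ht0.le (by norm_num),
      show β * t = (1 + β) * t + -t by ring, Real.exp_add, hc]
    have e2 : t ^ ν * t ^ ν = t ^ (ν - 1/2) * t ^ (ν - 1/2 + 1) := by
      rw [← Real.rpow_add ht0, ← Real.rpow_add ht0]; congr 1; ring
    linear_combination (Real.exp ((1 + β) * t) * Real.exp (-t) *
      (2 / (√π * Real.Gamma (ν + 1/2))) / 2 ^ ν * auxP (ν - 1/2) t) * e2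
  rw [hi]
  have e3 : √x * x ^ (-(ν - 1/2)) = (x ^ (ν - 1))⁻¹ := by
    rw [← Real.rpow_neg hx.le, Real.sqrt_eq_rpow, ← Real.rpow_add hx]; congr 1; ring
  have e4 : Real.exp (-β * x) = Real.exp x * Real.exp (-((1 + β) * x)) := by
    rw [← Real.exp_add]; congr 1; ring
  rw [div_eq_mul_inv _ (x ^ (ν - 1)), ← e3, e4]
  ring

lemma aux_main_bdd (β ν : ℝ) (hβ0 : -1 < β) (hβ1 : β < 0) (hν : -(1/2) < ν) :
    BddAbove ((fun x : ℝ => (Real.exp (-β * x) * besselK (ν + 1) x / x ^ (ν - 1)) *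
        ∫ t in (0 : ℝ)..x, Real.exp (β * t) * t ^ ν * besselI ν t) '' Set.Ioi 0) := by
  have h1 := (aux_main_tendsto β ν hβ0 hν).eventually_le_const (lt_add_one _)
  rw [eventually_atTop] at h1
  obtain ⟨M, hM⟩ := h1
  have ha : -1 < ν - 1/2 := by linarith
  have hG : 0 < Real.Gamma (ν + 1/2) := Real.Gamma_pos_of_pos (by linarith)
  have hpi : 0 < √π := by positivity
  obtain ⟨c, hc⟩ : ∃ c : ℝ, c = (2 / (√π * Real.Gamma (ν + 1/2))) / 2 ^ ν := ⟨_, rfl⟩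
  have hc0 : 0 < c := by rw [hc]; positivity
  obtain ⟨C, hC0, hC⟩ := aux_P_bound (ν - 1/2) ha
  obtain ⟨CK, hCK0, hCK⟩ := aux_K_bound (ν + 1) (by linarith)
  have h2ν : 0 < 2 * ν + 1 := by linarith
  refine ⟨max (1 / (2 * (1 + β)) + 1)
    (Real.exp (-β * M) * CK * (c * C * Real.exp M) / (2 * ν + 1) * M), ?_⟩
  rintro _ ⟨x, hx, rfl⟩
  have hx : 0 < x := hx
  rcases le_total M x with h | h
  · exact (hM x h).trans (le_max_left _ _)
  refine le_trans ?_ (le_max_right _ _)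
  have hI : ∫ t in (0 : ℝ)..x, Real.exp (β * t) * t ^ ν * besselI ν t ≤
      c * C * Real.exp M * (x ^ (2 * ν + 1) / (2 * ν + 1)) := by
    refine (Real.le_norm_self _).trans ?_
    have h2 : ‖∫ t in (0:ℝ)..x, Real.exp (β * t) * t ^ ν * besselI ν t‖ ≤
        ∫ t in (0:ℝ)..x, (c * C * Real.exp M) * t ^ (2 * ν) := by
      refine intervalIntegral.norm_integral_le_of_norm_le hx.le
        (Eventually.of_forall fun t ht => ?_)
        ((intervalIntegral.intervalIntegrable_rpow' (by linarith)).const_mul _)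
      have ht0 : 0 < t := ht.1
      have htM : t ≤ M := ht.2.trans h
      have hP0 := aux_P_nonneg (ν - 1/2) t
      have hP := hC t ht0
      rw [aux_I_eq ν t hν ht0, Real.div_rpow ht0.le (by norm_num)]
      have e5 : Real.exp (β * t) * t ^ ν * (t ^ ν / 2 ^ ν * (2 / (√π * Real.Gamma (ν + 1/2))) *
          auxP (ν - 1/2) t) = c * (Real.exp (β * t) * auxP (ν - 1/2) t) * t ^ (2 * ν) := by
        rw [hc, show 2 * ν = ν + ν by ring, Real.rpow_add ht0]; ring
      rw [e5, Real.norm_of_nonneg (by positivity)]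
      have h3 : Real.exp (β * t) ≤ 1 := Real.exp_le_one_iff.2 (by nlinarith)
      have h4 : Real.exp t ≤ Real.exp M := Real.exp_le_exp.2 htM
      have h5 : Real.exp (β * t) * auxP (ν - 1/2) t ≤ C * Real.exp M := by
        calc _ ≤ 1 * (C * Real.exp t) := by gcongr
          _ ≤ C * Real.exp M := by rw [one_mul]; gcongr
      rw [mul_assoc c C]
      gcongr
    rwa [intervalIntegral.integral_const_mul, integral_rpow (Or.inl (by linarith)),
      Real.zero_rpow h2ν.ne', sub_zero] at h2
  have hK := hCK x hx
  have hK0 := aux_K_nonneg (ν + 1) x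
  have hE : Real.exp (-β * x) ≤ Real.exp (-β * M) := Real.exp_le_exp.2 (by nlinarith)
  have hM0 : 0 < M := hx.trans_le h
  beta_reduce
  calc _ ≤ (Real.exp (-β * x) * besselK (ν + 1) x / x ^ (ν - 1)) *
        (c * C * Real.exp M * (x ^ (2 * ν + 1) / (2 * ν + 1))) := by gcongr
    _ ≤ (Real.exp (-β * M) * (CK * x ^ (-(ν + 1))) / x ^ (ν - 1)) *
        (c * C * Real.exp M * (x ^ (2 * ν + 1) / (2 * ν + 1))) := by gcongr
    _ = Real.exp (-β * M) * CK * (c * C * Real.exp M) / (2 * ν + 1) * x := by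
      have e6 : x ^ (-(ν + 1)) * (x ^ (ν - 1))⁻¹ * x ^ (2 * ν + 1) = x := by
        rw [← Real.rpow_neg hx.le, ← Real.rpow_add hx, ← Real.rpow_add hx]
        conv_rhs => rw [← Real.rpow_one x]
        congr 1; ring
      rw [div_eq_mul_inv _ (x ^ (ν - 1))]
      linear_combination (Real.exp (-β * M) * CK * (c * C * Real.exp M) / (2 * ν + 1)) * e6
    _ ≤ _ := by gcongr

theorem stmt_14 (β ν : ℝ) (hβ0 : -1 < β) (hβ1 : β < 0) (hν : -(1/2) < ν) :
    sSup ((fun x : ℝ => (Real.exp (-β * x) * besselK (ν + 1) x / x ^ (ν - 1)) *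
        ∫ t in (0 : ℝ)..x, Real.exp (β * t) * t ^ ν * besselI ν t) '' Set.Ioi 0) ≥
      1 / (2 * (1 + β)) := by
  refine le_of_tendsto (aux_main_tendsto β ν hβ0 hν) ?_
  filter_upwards [eventually_gt_atTop 0] with x hx
  exact le_csSup (aux_main_bdd β ν hβ0 hβ1 hν) ⟨x, hx, rfl⟩
end

section
/- Let −1 < β < 0 and ν > −1/2. Then for all x > 0, ( e^{−βx} K_ν(x) / x^{ν−1} ) · ∫_0^x e^{βt} t^ν I_ν(t) dt < (2ν+7) / (2(2ν+1)(1+β)). -/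
open Real MeasureTheory

section Helpers
open Filter Topology Set

noncomputable def bA (ν z : ℝ) : ℝ :=
  ∑' k : ℕ, z ^ k / (Real.Gamma (ν + (k : ℝ) + 1) * (Nat.factorial k : ℝ))

theorem bA_den_pos {ν : ℝ} (hν : -1 < ν) (k : ℕ) :
    0 < Real.Gamma (ν + (k : ℝ) + 1) * (Nat.factorial k : ℝ) := by
  have h0 : (0 : ℝ) ≤ k := Nat.cast_nonneg k
  have := Real.Gamma_pos_of_pos (s := ν + (k : ℝ) + 1) (by linarith)
  positivity

theorem bA_gamma_succ {ν : ℝ} (hν : -1 < ν) (k : ℕ) :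
    Real.Gamma (ν + 1 + (k : ℝ) + 1) = (ν + k + 1) * Real.Gamma (ν + (k : ℝ) + 1) := by
  have h0 : (0 : ℝ) ≤ k := Nat.cast_nonneg k
  rw [show ν + 1 + (k : ℝ) + 1 = (ν + k + 1) + 1 by ring, Real.Gamma_add_one (by linarith)]

theorem bA_summable_pos {ν : ℝ} (hν : -1 < ν) {z : ℝ} (hz : 0 < z) :
    Summable (fun k : ℕ => z ^ k / (Real.Gamma (ν + (k : ℝ) + 1) * (Nat.factorial k : ℝ))) := by
  refine summable_of_ratio_test_tendsto_lt_one (l := 0) (by norm_num) ?_ ?_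
  · exact Eventually.of_forall fun k => (div_pos (pow_pos hz k) (bA_den_pos hν k)).ne'
  · have h1 : Tendsto (fun k : ℕ => z * ((ν + k + 1)⁻¹ * ((k : ℝ) + 1)⁻¹)) atTop (𝓝 (z * (0 * 0))) := by
      have hk : Tendsto (fun k : ℕ => (k : ℝ)) atTop atTop := tendsto_natCast_atTop_atTop
      refine Tendsto.const_mul _ (Tendsto.mul ?_ ?_)
      · exact tendsto_inv_atTop_zero.comp
          (tendsto_atTop_add_const_right _ _ (tendsto_atTop_add_const_left _ _ hk))
      · exact tendsto_inv_atTop_zero.comp (tendsto_atTop_add_const_right _ _ hk)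
    simp only [mul_zero] at h1
    refine h1.congr fun k => ?_
    have hk : (0 : ℝ) ≤ k := Nat.cast_nonneg k
    have hd := bA_den_pos hν k
    have hg := Real.Gamma_pos_of_pos (s := ν + (k : ℝ) + 1) (by linarith)
    have hd' := bA_den_pos hν (k + 1)
    rw [Real.norm_of_nonneg (by positivity), Real.norm_of_nonneg (by positivity)]
    have h2 := bA_gamma_succ hν k
    rw [show ν + ((k + 1 : ℕ) : ℝ) + 1 = ν + 1 + (k : ℝ) + 1 by push_cast; ring, h2, Nat.factorial_succ]
    have h3 : ν + k + 1 ≠ 0 := by linarith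
    push_cast
    field_simp
    ring

theorem bA_summable {ν : ℝ} (hν : -1 < ν) (z : ℝ) :
    Summable (fun k : ℕ => z ^ k / (Real.Gamma (ν + (k : ℝ) + 1) * (Nat.factorial k : ℝ))) := by
  refine Summable.of_norm_bounded (bA_summable_pos hν (z := |z| + 1) (by positivity)) fun k => ?_
  have hd := bA_den_pos hν k
  rw [norm_div, norm_pow, Real.norm_of_nonneg hd.le, Real.norm_eq_abs]
  gcongr
  linarith

theorem bA_nonneg {ν : ℝ} (hν : -1 < ν) {z : ℝ} (hz : 0 ≤ z) : 0 ≤ bA ν z :=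
  tsum_nonneg fun k => div_nonneg (pow_nonneg hz k) (bA_den_pos hν k).le

theorem bA_zero (ν : ℝ) : bA ν 0 = 1 / Real.Gamma (ν + 1) := by
  unfold bA
  rw [tsum_eq_single 0]
  · simp
  · intro k hk; simp [hk]

theorem bA_hasDerivAt {ν : ℝ} (hν : -1 < ν) (z : ℝ) : HasDerivAt (bA ν) (bA (ν + 1) z) z := by
  have hν1 : -1 < ν + 1 := by linarith
  have key : ∀ k : ℕ, ∀ y : ℝ, ((k + 1 : ℕ) : ℝ) * y ^ k / (Real.Gamma (ν + ((k + 1 : ℕ) : ℝ) + 1) * ((k + 1).factorial : ℝ))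
      = y ^ k / (Real.Gamma (ν + 1 + (k : ℝ) + 1) * (Nat.factorial k : ℝ)) := by
    intro k y
    have hd := bA_den_pos hν1 k
    have hd' := bA_den_pos hν (k + 1)
    have e : ν + ((k + 1 : ℕ) : ℝ) + 1 = ν + 1 + (k : ℝ) + 1 := by push_cast; ring
    rw [e] at hd' ⊢
    have := left_ne_zero_of_mul hd.ne'
    rw [Nat.factorial_succ]
    push_cast
    have h3 : (k : ℝ) + 1 ≠ 0 := by positivity
    field_simp
  have hs := bA_summable hν1 (|z| + 1)
  have h := hasDerivAt_tsum_of_isPreconnected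
    (g := fun (k : ℕ) (y : ℝ) => y ^ k / (Real.Gamma (ν + (k : ℝ) + 1) * (Nat.factorial k : ℝ)))
    (g' := fun (k : ℕ) (y : ℝ) => (k : ℝ) * y ^ (k - 1) / (Real.Gamma (ν + (k : ℝ) + 1) * (Nat.factorial k : ℝ)))
    (u := fun (k : ℕ) => (k : ℝ) * (|z| + 1) ^ (k - 1) / (Real.Gamma (ν + (k : ℝ) + 1) * (Nat.factorial k : ℝ)))
    (t := Metric.ball 0 (|z| + 1)) (y₀ := 0) (y := z) ?_ Metric.isOpen_ball
    (convex_ball _ _).isPreconnected ?_ ?_ ?_ (bA_summable hν 0) ?_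
  · refine HasDerivAt.congr_deriv h ?_
    rw [Summable.tsum_eq_zero_add]
    · simp only [Nat.add_sub_cancel, key]
      simp [bA]
    · rw [← summable_nat_add_iff 1]
      simp only [Nat.add_sub_cancel, key]
      exact bA_summable hν1 z
  · rw [← summable_nat_add_iff 1]
    simp only [Nat.add_sub_cancel, key]
    exact hs
  · intro k y _
    exact (hasDerivAt_pow k y).div_const _
  · intro k y hy
    have hd := bA_den_pos hν k
    rw [norm_div, norm_mul, norm_pow, Real.norm_of_nonneg hd.le, Real.norm_eq_abs y, Real.norm_natCast]
    simp only [mem_ball_zero_iff, Real.norm_eq_abs] at hy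
    gcongr
  · simp; positivity
  · simp

theorem bA_rec {ν : ℝ} (hν : -1 < ν) (z : ℝ) :
    bA ν z = (ν + 1) * bA (ν + 1) z + z * bA (ν + 2) z := by
  have hν1 : -1 < ν + 1 := by linarith
  have hν2 : -1 < ν + 2 := by linarith
  have s1 := (bA_summable hν1 z).mul_left (ν + 1)
  have s2 := (bA_summable hν2 z).mul_left z
  have s3 : Summable (fun k : ℕ => (k : ℝ) * z ^ k / (Real.Gamma (ν + 1 + (k : ℝ) + 1) * (Nat.factorial k : ℝ))) ∧
     z * bA (ν + 2) z = ∑' k : ℕ, (k : ℝ) * z ^ k / (Real.Gamma (ν + 1 + (k : ℝ) + 1) * (Nat.factorial k : ℝ)) := by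
    have key : ∀ k : ℕ, ((k + 1 : ℕ) : ℝ) * z ^ (k + 1) / (Real.Gamma (ν + 1 + ((k + 1 : ℕ) : ℝ) + 1) * ((k + 1).factorial : ℝ))
      = z * (z ^ k / (Real.Gamma (ν + 2 + (k : ℝ) + 1) * (Nat.factorial k : ℝ))) := by
      intro k
      have hd := bA_den_pos hν2 k
      have e : ν + 1 + ((k + 1 : ℕ) : ℝ) + 1 = ν + 2 + (k : ℝ) + 1 := by push_cast; ring
      rw [e]
      have := left_ne_zero_of_mul hd.ne'
      rw [Nat.factorial_succ]
      push_cast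
      have h3 : (k : ℝ) + 1 ≠ 0 := by positivity
      field_simp
      ring
    have hsum : Summable (fun k : ℕ => (k : ℝ) * z ^ k / (Real.Gamma (ν + 1 + (k : ℝ) + 1) * (Nat.factorial k : ℝ))) := by
      rw [← summable_nat_add_iff 1]
      simp only [key]
      exact s2
    refine ⟨hsum, ?_⟩
    rw [hsum.tsum_eq_zero_add]
    simp only [key]
    rw [tsum_mul_left]
    simp [bA]
  rw [s3.2]
  unfold bA
  rw [← tsum_mul_left, ← s1.tsum_add s3.1]
  refine tsum_congr fun k => ?_
  have hk : (0 : ℝ) ≤ k := Nat.cast_nonneg k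
  have hd := bA_den_pos hν k
  have := left_ne_zero_of_mul hd.ne'
  have h3 : ν + k + 1 ≠ 0 := by linarith
  rw [bA_gamma_succ hν k]
  field_simp
  ring

theorem besselI_eq (ν : ℝ) {x : ℝ} (hx : 0 < x) :
    besselI ν x = (x / 2) ^ ν * bA ν ((x / 2) ^ 2) := by
  unfold besselI bA
  rw [← tsum_mul_left]
  refine tsum_congr fun k => ?_
  rw [Real.rpow_add (by positivity), show (2 * (k : ℝ)) = ((2 * k : ℕ) : ℝ) by push_cast; ring,
    Real.rpow_natCast, pow_mul, mul_div_assoc]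

theorem besselI_nonneg {ν : ℝ} (hν : -1 < ν) {x : ℝ} (hx : 0 < x) : 0 ≤ besselI ν x := by
  rw [besselI_eq ν hx]
  exact mul_nonneg (by positivity) (bA_nonneg hν (by positivity))

theorem besselI_hasDerivAt {ν : ℝ} (hν : -1 < ν) {x : ℝ} (hx : 0 < x) :
    HasDerivAt (besselI ν) (besselI (ν + 1) x + ν / x * besselI ν x) x := by
  have h1 : HasDerivAt (fun y : ℝ => y / 2) (1 / 2) x := (hasDerivAt_id x).div_const 2
  have h2 : HasDerivAt (fun y : ℝ => (y / 2) ^ ν) _ x :=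
    h1.rpow_const (Or.inl (by positivity))
  have h3 : HasDerivAt (fun y : ℝ => bA ν ((y / 2) ^ 2)) _ x :=
    HasDerivAt.comp x (h := fun y : ℝ => (y / 2) ^ 2) (bA_hasDerivAt hν ((x / 2) ^ 2)) (h1.pow 2)
  have h4 := h2.mul h3
  have h5 : (fun y : ℝ => besselI ν y) =ᶠ[𝓝 x] (fun y : ℝ => (y / 2) ^ ν * bA ν ((y / 2) ^ 2)) := by
    filter_upwards [lt_mem_nhds hx] with y hy using besselI_eq ν hy
  refine (h4.congr_of_eventuallyEq h5).congr_deriv ?_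
  rw [besselI_eq ν hx, besselI_eq (ν + 1) hx, Real.rpow_sub_one (by positivity), Real.rpow_add_one (by positivity)]
  field_simp
  ring

theorem besselI_hasDerivAt' {ν : ℝ} (hν : -1 < ν) {x : ℝ} (hx : 0 < x) :
    HasDerivAt (besselI (ν + 1)) (besselI ν x - (ν + 1) / x * besselI (ν + 1) x) x := by
  refine (besselI_hasDerivAt (ν := ν + 1) (by linarith) hx).congr_deriv ?_
  rw [besselI_eq ν hx, besselI_eq (ν + 1) hx, besselI_eq (ν + 1 + 1) hx, bA_rec hν,
    Real.rpow_add_one (by positivity), Real.rpow_add_one (by positivity), show ν + 1 + 1 = ν + 2 by ring]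
  field_simp
  ring

theorem bA_continuous {ν : ℝ} (hν : -1 < ν) : Continuous (bA ν) :=
  continuous_iff_continuousAt.2 fun z => (bA_hasDerivAt hν z).continuousAt

/-- `t^a I_ν(t)` is continuous up to the origin if `a + ν > 0`. -/
theorem besselI_rpow_continuousOn {ν a : ℝ} (hν : -1 < ν) (ha : a ≠ 0) (h : 0 < a + ν) (x : ℝ) :
    ContinuousOn (fun t : ℝ => t ^ a * besselI ν t) (Icc 0 x) := by
  have hc : Continuous (fun t : ℝ => (1 / 2 : ℝ) ^ ν * t ^ (a + ν) * bA ν ((t / 2) ^ 2)) := by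
    have h1 : Continuous (fun t : ℝ => t ^ (a + ν)) := Real.continuous_rpow_const h.le
    have h2 := bA_continuous hν
    fun_prop
  refine hc.continuousOn.congr fun t ht => ?_
  rcases ht.1.eq_or_lt with h0 | h0
  · subst h0
    simp [Real.zero_rpow ha, Real.zero_rpow h.ne']
  · simp only [besselI_eq ν h0]
    rw [Real.rpow_add h0, div_eq_mul_one_div t 2, Real.mul_rpow h0.le (by norm_num)]
    ring
theorem bK_bound {x : ℝ} (hx : 0 < x) (c : ℝ) {t : ℝ} (ht : 0 ≤ t) :
    Real.exp (-x * Real.cosh t) * Real.exp (c * t) ≤ Real.exp ((c + 1) ^ 2 / x) * Real.exp (-1 * t) := by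
  rw [← Real.exp_add, ← Real.exp_add, Real.exp_le_exp]
  have h1 : t ^ 2 / 4 ≤ Real.cosh t := by
    rw [Real.cosh_eq]
    have := Real.quadratic_le_exp_of_nonneg ht
    have := Real.exp_pos (-t)
    nlinarith
  have h2 : x * (t ^ 2 / 4) ≤ x * Real.cosh t := by gcongr
  have h3 : (c + 1) * t ≤ (c + 1) ^ 2 / x + x * (t ^ 2 / 4) := by
    have e : (c + 1) ^ 2 / x + x * (t ^ 2 / 4) - (c + 1) * t = (c + 1 - x * t / 2) ^ 2 / x := by
      field_simp; ring
    have : 0 ≤ (c + 1 - x * t / 2) ^ 2 / x := by positivity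
    linarith
  linarith

theorem bK_integrable {x : ℝ} (hx : 0 < x) {φ : ℝ → ℝ} (hφ : Continuous φ) (c : ℝ)
    (hb : ∀ t, 0 ≤ t → |φ t| ≤ Real.exp (c * t)) :
    IntegrableOn (fun t => Real.exp (-x * Real.cosh t) * φ t) (Ioi 0) := by
  have hi := (integrableOn_exp_mul_Ioi (a := -1) (by norm_num) 0).const_mul (Real.exp ((c + 1) ^ 2 / x))
  refine Integrable.mono' hi ?_ ?_
  · exact Continuous.aestronglyMeasurable (by fun_prop)
  · refine (ae_restrict_iff' measurableSet_Ioi).2 (Eventually.of_forall fun t ht => ?_)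
    rw [norm_mul, Real.norm_of_nonneg (Real.exp_pos _).le, Real.norm_eq_abs]
    exact (mul_le_mul_of_nonneg_left (hb t (le_of_lt ht)) (Real.exp_pos _).le).trans (bK_bound hx c (le_of_lt ht))

theorem bK_tendsto {x : ℝ} (hx : 0 < x) {φ : ℝ → ℝ} (c : ℝ)
    (hb : ∀ t, 0 ≤ t → |φ t| ≤ Real.exp (c * t)) :
    Tendsto (fun t => Real.exp (-x * Real.cosh t) * φ t) atTop (𝓝 0) := by
  have h : Tendsto (fun t : ℝ => Real.exp ((c + 1) ^ 2 / x) * Real.exp (-1 * t)) atTop (𝓝 0) := by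
    have h1 : Tendsto (fun t : ℝ => Real.exp (-t)) atTop (𝓝 0) := Real.tendsto_exp_neg_atTop_nhds_zero
    have := h1.const_mul (Real.exp ((c + 1) ^ 2 / x))
    simpa using this
  refine squeeze_zero_norm' ?_ h
  filter_upwards [eventually_ge_atTop 0] with t ht
  rw [norm_mul, Real.norm_of_nonneg (Real.exp_pos _).le, Real.norm_eq_abs]
  exact (mul_le_mul_of_nonneg_left (hb t ht) (Real.exp_pos _).le).trans (bK_bound hx c ht)

theorem abs_cosh_le (ν : ℝ) {t : ℝ} (ht : 0 ≤ t) : |Real.cosh (ν * t)| ≤ Real.exp (|ν| * t) := by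
  rw [abs_of_pos (Real.cosh_pos _), ← Real.cosh_abs, abs_mul, abs_of_nonneg ht, Real.cosh_eq]
  have : Real.exp (-(|ν| * t)) ≤ Real.exp (|ν| * t) := by
    rw [Real.exp_le_exp]; have : 0 ≤ |ν| * t := by positivity
    linarith
  linarith

theorem abs_sinh_le (ν : ℝ) {t : ℝ} (ht : 0 ≤ t) : |Real.sinh (ν * t)| ≤ Real.exp (|ν| * t) := by
  refine le_trans ?_ (abs_cosh_le ν ht)
  rw [abs_of_pos (Real.cosh_pos _)]
  refine abs_le_of_sq_le_sq ?_ (Real.cosh_pos _).le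
  have := Real.cosh_sq (ν * t)
  linarith

theorem bK_int_cosh {x : ℝ} (hx : 0 < x) (ν : ℝ) :
    IntegrableOn (fun t => Real.exp (-x * Real.cosh t) * Real.cosh (ν * t)) (Ioi 0) :=
  bK_integrable hx (by fun_prop) |ν| fun _ ht => abs_cosh_le ν ht

theorem abs_prod_le {ν t u v : ℝ} (hu : |u| ≤ Real.exp (1 * t)) (hv : |v| ≤ Real.exp (|ν| * t)) :
    |u * v| ≤ Real.exp ((1 + |ν|) * t) := by
  rw [abs_mul, add_mul, Real.exp_add]
  gcongr

theorem abs_cosh_le1 {t : ℝ} (ht : 0 ≤ t) : |Real.cosh t| ≤ Real.exp (1 * t) := by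
  simpa using abs_cosh_le 1 ht

theorem abs_sinh_le1 {t : ℝ} (ht : 0 ≤ t) : |Real.sinh t| ≤ Real.exp (1 * t) := by
  simpa using abs_sinh_le 1 ht

theorem bK_int_coshcosh {x : ℝ} (hx : 0 < x) (ν : ℝ) :
    IntegrableOn (fun t => Real.exp (-x * Real.cosh t) * (Real.cosh t * Real.cosh (ν * t))) (Ioi 0) :=
  bK_integrable hx (by fun_prop) (1 + |ν|) fun _ ht => abs_prod_le (abs_cosh_le1 ht) (abs_cosh_le ν ht)

theorem bK_int_sinhsinh {x : ℝ} (hx : 0 < x) (ν : ℝ) :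
    IntegrableOn (fun t => Real.exp (-x * Real.cosh t) * (Real.sinh t * Real.sinh (ν * t))) (Ioi 0) :=
  bK_integrable hx (by fun_prop) (1 + |ν|) fun _ ht => abs_prod_le (abs_sinh_le1 ht) (abs_sinh_le ν ht)

theorem besselK_nonneg (ν x : ℝ) : 0 ≤ besselK ν x :=
  integral_nonneg fun t => mul_nonneg (Real.exp_pos _).le (Real.cosh_pos _).le

theorem besselK_mono {ν : ℝ} (hν : -(1/2) < ν) {x : ℝ} (hx : 0 < x) :
    besselK ν x ≤ besselK (ν + 1) x := by
  refine integral_mono (bK_int_cosh hx ν) (bK_int_cosh hx (ν + 1)) fun t => ?_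
  refine mul_le_mul_of_nonneg_left ?_ (Real.exp_pos _).le
  rw [Real.cosh_le_cosh, abs_mul, abs_mul]
  refine mul_le_mul_of_nonneg_right ?_ (abs_nonneg _)
  rw [abs_of_pos (show 0 < ν + 1 by linarith), abs_le]
  constructor <;> linarith

/-- integration by parts -/
theorem bK_parts {x : ℝ} (hx : 0 < x) (ν : ℝ) :
    x * ∫ t in Ioi (0 : ℝ), Real.exp (-x * Real.cosh t) * (Real.sinh t * Real.sinh (ν * t))
      = ν * besselK ν x := by
  have h := MeasureTheory.integral_Ioi_of_hasDerivAt_of_tendsto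
    (f := fun t => Real.exp (-x * Real.cosh t) * Real.sinh (ν * t))
    (f' := fun t => ν * (Real.exp (-x * Real.cosh t) * Real.cosh (ν * t)) -
      x * (Real.exp (-x * Real.cosh t) * (Real.sinh t * Real.sinh (ν * t)))) (a := 0) (m := 0)
    (Continuous.continuousWithinAt (by fun_prop)) ?_ ?_
    (bK_tendsto hx |ν| fun _ ht => abs_sinh_le ν ht)
  · rw [integral_sub ((bK_int_cosh hx ν).const_mul _) ((bK_int_sinhsinh hx ν).const_mul _),
      integral_const_mul, integral_const_mul] at h
    simp only [mul_zero, Real.sinh_zero, sub_zero] at h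
    unfold besselK
    linarith
  · intro t _
    have h1 : HasDerivAt (fun t => Real.exp (-x * Real.cosh t)) _ t := ((Real.hasDerivAt_cosh t).const_mul (-x)).exp
    have h2 : HasDerivAt (fun t => Real.sinh (ν * t)) _ t := ((hasDerivAt_id t).const_mul ν).sinh
    refine (h1.mul h2).congr_deriv ?_
    simp only [id]
    ring
  · exact ((bK_int_cosh hx ν).const_mul _).sub ((bK_int_sinhsinh hx ν).const_mul _)

theorem besselK_succ {x : ℝ} (hx : 0 < x) (ν : ℝ) :
    besselK (ν + 1) x = (∫ t in Ioi (0 : ℝ), Real.exp (-x * Real.cosh t) * (Real.cosh t * Real.cosh (ν * t)))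
      + ν / x * besselK ν x := by
  have h := bK_parts hx ν
  have h2 : ν / x * besselK ν x = ∫ t in Ioi (0 : ℝ), Real.exp (-x * Real.cosh t) * (Real.sinh t * Real.sinh (ν * t)) := by
    rw [div_mul_eq_mul_div, ← h]; field_simp
  rw [h2, ← integral_add (bK_int_coshcosh hx ν) (bK_int_sinhsinh hx ν)]
  unfold besselK
  congr 1; ext t
  rw [show (ν + 1) * t = t + ν * t by ring, Real.cosh_add]
  ring

theorem besselK_pred {x : ℝ} (hx : 0 < x) (ν : ℝ) :
    besselK ν x = (∫ t in Ioi (0 : ℝ), Real.exp (-x * Real.cosh t) * (Real.cosh t * Real.cosh ((ν + 1) * t)))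
      - (ν + 1) / x * besselK (ν + 1) x := by
  have h := bK_parts hx (ν + 1)
  have h2 : (ν + 1) / x * besselK (ν + 1) x = ∫ t in Ioi (0 : ℝ), Real.exp (-x * Real.cosh t) * (Real.sinh t * Real.sinh ((ν + 1) * t)) := by
    rw [div_mul_eq_mul_div, ← h]; field_simp
  rw [h2, ← integral_sub (bK_int_coshcosh hx _) (bK_int_sinhsinh hx _)]
  unfold besselK
  congr 1; ext t
  rw [show ν * t = (ν + 1) * t - t by ring, Real.cosh_sub]
  ring

theorem besselK_hasDerivAt0 {x : ℝ} (hx : 0 < x) (ν : ℝ) :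
    HasDerivAt (besselK ν)
      (-∫ t in Ioi (0 : ℝ), Real.exp (-x * Real.cosh t) * (Real.cosh t * Real.cosh (ν * t))) x := by
  have hx2 : 0 < x / 2 := by positivity
  have h := (hasDerivAt_integral_of_dominated_loc_of_deriv_le (μ := volume.restrict (Ioi (0 : ℝ)))
    (F := fun y t => Real.exp (-y * Real.cosh t) * Real.cosh (ν * t))
    (F' := fun y t => -(Real.exp (-y * Real.cosh t) * (Real.cosh t * Real.cosh (ν * t))))
    (bound := fun t => Real.exp (-(x / 2) * Real.cosh t) * (Real.cosh t * Real.cosh (ν * t)))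
    (s := Ioi (x / 2)) (x₀ := x) (Ioi_mem_nhds (by linarith)) ?_ (bK_int_cosh hx ν) ?_ ?_
    (bK_int_coshcosh hx2 ν) ?_).2
  · rw [integral_neg] at h
    exact h
  · exact Eventually.of_forall fun y => Continuous.aestronglyMeasurable (by fun_prop)
  · exact Continuous.aestronglyMeasurable (by fun_prop)
  · refine Eventually.of_forall fun t y hy => ?_
    have := Real.cosh_pos t
    have := Real.cosh_pos (ν * t)
    rw [norm_neg, Real.norm_of_nonneg (by positivity)]
    gcongr
    exact le_of_lt hy
  · refine Eventually.of_forall fun t y hy => ?_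
    have h1 : HasDerivAt (fun y : ℝ => Real.exp (-y * Real.cosh t)) _ y :=
      ((hasDerivAt_id y).neg.mul_const (Real.cosh t)).exp
    refine (h1.mul_const (Real.cosh (ν * t))).congr_deriv ?_
    simp only [id, Pi.neg_apply]
    ring

theorem besselK_hasDerivAt {x : ℝ} (hx : 0 < x) (ν : ℝ) :
    HasDerivAt (besselK ν) (-besselK (ν + 1) x + ν / x * besselK ν x) x := by
  refine (besselK_hasDerivAt0 hx ν).congr_deriv ?_
  rw [besselK_succ hx ν]; ring

theorem besselK_hasDerivAt' {x : ℝ} (hx : 0 < x) (ν : ℝ) :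
    HasDerivAt (besselK (ν + 1)) (-besselK ν x - (ν + 1) / x * besselK (ν + 1) x) x := by
  refine (besselK_hasDerivAt0 hx (ν + 1)).congr_deriv ?_
  rw [besselK_pred hx ν]; ring

theorem besselK_upper {x : ℝ} (hx : 0 < x) {μ : ℝ} (hμ : 0 < μ) :
    besselK μ x ≤ (1 / 2) * ((2 / x) ^ μ * Real.Gamma μ) + 1 / (2 * μ) := by
  have hg := Real.GammaIntegral_convergent hμ
  have hpt : ∀ t : ℝ, 0 ≤ t → Real.exp (-(x / 2 * Real.exp t)) * Real.exp (μ * t) ≤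
     Real.exp ((μ + 1) ^ 2 / (x / 2)) * Real.exp (-1 * t) := by
    intro t ht
    refine le_trans ?_ (bK_bound (x := x / 2) (by positivity) μ ht)
    gcongr
    rw [neg_mul, neg_le_neg_iff]
    gcongr
    rw [Real.cosh_eq]
    have : Real.exp (-t) ≤ Real.exp t := by rw [Real.exp_le_exp]; linarith
    linarith
  have hi : IntegrableOn (fun t => Real.exp (-(x / 2 * Real.exp t)) * Real.exp (μ * t)) (Ici 0) := by
    rw [integrableOn_Ici_iff_integrableOn_Ioi]
    have hi := (integrableOn_exp_mul_Ioi (a := -1) (by norm_num) 0).const_mul (Real.exp ((μ + 1) ^ 2 / (x / 2)))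
    refine Integrable.mono' hi (Continuous.aestronglyMeasurable (by fun_prop)) ?_
    refine (ae_restrict_iff' measurableSet_Ioi).2 (Eventually.of_forall fun t ht => ?_)
    rw [Real.norm_of_nonneg (by positivity)]
    exact hpt t (le_of_lt ht)
  have heq : ∀ t : ℝ, ((fun u : ℝ => Real.exp (-u) * u ^ (μ - 1)) ∘ (fun t => x / 2 * Real.exp t)) t * (x / 2 * Real.exp t)
      = (x / 2) ^ μ * (Real.exp (-(x / 2 * Real.exp t)) * Real.exp (μ * t)) := by
    intro t
    simp only [Function.comp]
    rw [mul_assoc, ← Real.rpow_add_one (by positivity), sub_add_cancel, Real.mul_rpow (by positivity) (by positivity),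
      ← Real.exp_mul, mul_comm t μ]
    ring
  have hsub : ∀ s : Set ℝ, (fun t => x / 2 * Real.exp t) '' s ⊆ Ioi 0 := by
    rintro s _ ⟨t, _, rfl⟩
    simp only [mem_Ioi]; positivity
  have hcv := MeasureTheory.integral_comp_mul_deriv_Ioi (f := fun t => x / 2 * Real.exp t)
    (f' := fun t => x / 2 * Real.exp t) (g := fun u => Real.exp (-u) * u ^ (μ - 1)) (a := 0)
    (by fun_prop) (Tendsto.const_mul_atTop (by positivity) Real.tendsto_exp_atTop)
    (fun t _ => ((Real.hasDerivAt_exp t).const_mul _).hasDerivWithinAt)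
    (by
      refine ContinuousOn.mono ?_ (hsub _)
      intro u hu
      have : u ≠ 0 := (ne_of_gt hu)
      exact (ContinuousAt.mul (by fun_prop) (Real.continuousAt_rpow_const _ _ (Or.inl this))).continuousWithinAt)
    (hg.mono_set (hsub _))
    (by simp only [heq]; exact hi.const_mul _)
  simp only [heq] at hcv
  rw [integral_const_mul] at hcv
  have h1 : ∫ u in Ioi (x / 2 * Real.exp 0), Real.exp (-u) * u ^ (μ - 1) ≤ Real.Gamma μ := by
    rw [Real.Gamma_eq_integral hμ]
    refine setIntegral_mono_set hg ?_ ?_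
    · refine (ae_restrict_iff' measurableSet_Ioi).2 (Eventually.of_forall fun t ht => ?_)
      have : 0 < t := ht
      simp only [Pi.zero_apply]; positivity
    · refine LE.le.eventuallyLE (Ioi_subset_Ioi ?_)
      positivity
  have h2 : ∫ t in Ioi (0 : ℝ), Real.exp (-μ * t) = 1 / μ := by
    rw [integral_exp_mul_Ioi (by linarith)]; simp
  have h3 : besselK μ x ≤ ∫ t in Ioi (0 : ℝ), ((1 / 2) * (Real.exp (-(x / 2 * Real.exp t)) * Real.exp (μ * t)) +
      (1 / 2) * Real.exp (-μ * t)) := by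
    refine setIntegral_mono_on (bK_int_cosh hx μ) ?_ measurableSet_Ioi ?_
    · exact ((hi.mono_set Ioi_subset_Ici_self).const_mul _).add ((integrableOn_exp_mul_Ioi (by linarith) 0).const_mul _)
    · intro t ht
      have e1 : Real.exp (-x * Real.cosh t) ≤ Real.exp (-(x / 2 * Real.exp t)) := by
        rw [Real.exp_le_exp, Real.cosh_eq]
        have := mul_pos hx (Real.exp_pos (-t))
        linarith
      have e2 : Real.exp (-x * Real.cosh t) ≤ 1 := by
        rw [Real.exp_le_one_iff]
        have := mul_pos hx (Real.cosh_pos t)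
        linarith
      rw [Real.cosh_eq (μ * t), neg_mul μ t]
      have f1 := mul_le_mul_of_nonneg_right e1 (Real.exp_pos (μ * t)).le
      have f2 := mul_le_mul_of_nonneg_right e2 (Real.exp_pos (-(μ * t))).le
      linarith
  rw [integral_add ((hi.mono_set Ioi_subset_Ici_self).const_mul _) ((integrableOn_exp_mul_Ioi (by linarith) 0).const_mul _),
    integral_const_mul, integral_const_mul, h2] at h3
  have h4 : ∫ t in Ioi (0 : ℝ), Real.exp (-(x / 2 * Real.exp t)) * Real.exp (μ * t) ≤ (2 / x) ^ μ * Real.Gamma μ := by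
    have e : (2 / x) ^ μ * (x / 2) ^ μ = 1 := by
      rw [← Real.mul_rpow (by positivity) (by positivity)]
      have : 2 / x * (x / 2) = 1 := by field_simp
      rw [this, Real.one_rpow]
    calc _ = (2 / x) ^ μ * ((x / 2) ^ μ * ∫ t in Ioi (0 : ℝ), Real.exp (-(x / 2 * Real.exp t)) * Real.exp (μ * t)) := by
          rw [← mul_assoc, e, one_mul]
      _ ≤ _ := by
          rw [hcv]
          gcongr
  have e5 : 1 / (2 * μ) = 1 / 2 * (1 / μ) := by field_simp
  rw [e5]
  linarith

theorem besselK_ratio {ν : ℝ} (hν : 1 / 2 ≤ ν) {x : ℝ} (hx : 0 < x) :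
    (1 + (ν + 1 / 2) / x) * besselK ν x ≤ besselK (ν + 1) x := by
  have hc1 : ∀ t : ℝ, 0 < 1 + Real.cosh t := fun t => by have := Real.cosh_pos t; linarith
  have hcont : Continuous (fun t : ℝ => 1 / (1 + Real.cosh t) * Real.cosh (ν * t) +
      ν * (Real.sinh t / (1 + Real.cosh t) * Real.sinh (ν * t))) := by
    have h1 : Continuous (fun t : ℝ => 1 / (1 + Real.cosh t)) :=
      continuous_const.div (by fun_prop) fun t => (hc1 t).ne'
    have h2 : Continuous (fun t : ℝ => Real.sinh t / (1 + Real.cosh t)) :=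
      Real.continuous_sinh.div (by fun_prop) fun t => (hc1 t).ne'
    fun_prop
  have hT : ∀ t : ℝ, |Real.sinh t / (1 + Real.cosh t)| ≤ 1 := by
    intro t
    rw [abs_div, abs_of_pos (hc1 t), div_le_one (hc1 t)]
    refine abs_le_of_sq_le_sq ?_ (hc1 t).le
    have := Real.cosh_sq t
    have := Real.cosh_pos t
    nlinarith
  have hT1 : ∀ t : ℝ, |1 / (1 + Real.cosh t)| ≤ 1 := by
    intro t
    rw [abs_div, abs_of_pos (hc1 t), div_le_one (hc1 t), abs_one]
    have := Real.cosh_pos t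
    linarith
  have i1 : IntegrableOn (fun t => Real.exp (-x * Real.cosh t) * (1 / (1 + Real.cosh t) * Real.cosh (ν * t))) (Ioi 0) := by
    refine bK_integrable hx ?_ |ν| ?_
    · have h1 : Continuous (fun t : ℝ => 1 / (1 + Real.cosh t)) :=
        continuous_const.div (by fun_prop) fun t => (hc1 t).ne'
      fun_prop
    · intro t ht
      rw [abs_mul]
      exact (mul_le_of_le_one_left (abs_nonneg _) (hT1 t)).trans (abs_cosh_le ν ht)
  have i2 : IntegrableOn (fun t => Real.exp (-x * Real.cosh t) * (Real.sinh t / (1 + Real.cosh t) * Real.sinh (ν * t))) (Ioi 0) := by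
    refine bK_integrable hx ?_ |ν| ?_
    · have h1 : Continuous (fun t : ℝ => Real.sinh t / (1 + Real.cosh t)) :=
        Real.continuous_sinh.div (by fun_prop) fun t => (hc1 t).ne'
      fun_prop
    · intro t ht
      rw [abs_mul]
      exact (mul_le_of_le_one_left (abs_nonneg _) (hT t)).trans (abs_sinh_le ν ht)
  have h := MeasureTheory.integral_Ioi_of_hasDerivAt_of_tendsto
    (f := fun t => Real.exp (-x * Real.cosh t) * (Real.sinh t / (1 + Real.cosh t) * Real.cosh (ν * t)))
    (f' := fun t => (Real.exp (-x * Real.cosh t) * (1 / (1 + Real.cosh t) * Real.cosh (ν * t)) +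
      ν * (Real.exp (-x * Real.cosh t) * (Real.sinh t / (1 + Real.cosh t) * Real.sinh (ν * t)))) -
      x * (Real.exp (-x * Real.cosh t) * (Real.cosh t * Real.cosh (ν * t)) -
        Real.exp (-x * Real.cosh t) * Real.cosh (ν * t))) (a := 0) (m := 0)
    ?_ ?_ ?_ ?_
  · have i3 : IntegrableOn (fun t => Real.exp (-x * Real.cosh t) * (1 / (1 + Real.cosh t) * Real.cosh (ν * t)) +
      ν * (Real.exp (-x * Real.cosh t) * (Real.sinh t / (1 + Real.cosh t) * Real.sinh (ν * t)))) (Ioi 0) :=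
      i1.add (i2.const_mul _)
    have i4 : IntegrableOn (fun t => x * (Real.exp (-x * Real.cosh t) * (Real.cosh t * Real.cosh (ν * t)) -
        Real.exp (-x * Real.cosh t) * Real.cosh (ν * t))) (Ioi 0) :=
      ((bK_int_coshcosh hx ν).sub (bK_int_cosh hx ν)).const_mul _
    rw [integral_sub i3 i4,
      integral_const_mul, integral_sub (bK_int_coshcosh hx ν) (bK_int_cosh hx ν)] at h
    simp only [Real.sinh_zero, zero_div, zero_mul, mul_zero, sub_zero] at h
    have hle : 1 / 2 * besselK ν x ≤ ∫ t in Ioi (0 : ℝ), (Real.exp (-x * Real.cosh t) * (1 / (1 + Real.cosh t) * Real.cosh (ν * t)) +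
      ν * (Real.exp (-x * Real.cosh t) * (Real.sinh t / (1 + Real.cosh t) * Real.sinh (ν * t)))) := by
      unfold besselK
      rw [← integral_const_mul]
      refine setIntegral_mono_on ((bK_int_cosh hx ν).const_mul _) (i1.add (i2.const_mul _)) measurableSet_Ioi ?_
      intro t ht
      have ht0 : 0 < t := ht
      have hs1 : 0 ≤ Real.sinh t := Real.sinh_nonneg_iff.2 ht0.le
      have hs2 : 0 ≤ Real.sinh (ν * t) := Real.sinh_nonneg_iff.2 (by positivity)
      have hk : Real.cosh (ν * t - t) ≤ Real.cosh (ν * t) := by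
        rw [Real.cosh_le_cosh, abs_of_pos (show 0 < ν * t by positivity), abs_le]
        constructor <;> nlinarith
      rw [Real.cosh_sub] at hk
      have hk2 : Real.sinh t * Real.sinh (ν * t) ≤ 2 * ν * (Real.sinh t * Real.sinh (ν * t)) := by
        have := mul_nonneg hs1 hs2
        nlinarith
      have e : 1 / 2 * Real.cosh (ν * t) ≤ 1 / (1 + Real.cosh t) * Real.cosh (ν * t) +
          ν * (Real.sinh t / (1 + Real.cosh t) * Real.sinh (ν * t)) := by
        have e1 : 1 / (1 + Real.cosh t) * Real.cosh (ν * t) +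
          ν * (Real.sinh t / (1 + Real.cosh t) * Real.sinh (ν * t)) =
          (Real.cosh (ν * t) + ν * (Real.sinh t * Real.sinh (ν * t))) / (1 + Real.cosh t) := by
          have := (hc1 t).ne'
          field_simp
        rw [e1, le_div_iff₀ (hc1 t)]
        nlinarith
      have := mul_le_mul_of_nonneg_left e (Real.exp_pos (-x * Real.cosh t)).le
      calc _ = Real.exp (-x * Real.cosh t) * (1 / 2 * Real.cosh (ν * t)) := by ring
        _ ≤ _ := this
        _ = _ := by ring
    have h0 : (∫ t in Ioi (0 : ℝ), Real.exp (-x * Real.cosh t) * Real.cosh (ν * t)) = besselK ν x := rfl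
    rw [h0] at h
    rw [besselK_succ hx ν]
    set J := ∫ t in Ioi (0 : ℝ), Real.exp (-x * Real.cosh t) * (Real.cosh t * Real.cosh (ν * t)) with hJ
    have h5 : 1 / 2 * besselK ν x ≤ x * (J - besselK ν x) := by linarith
    have h6 : 1 / 2 * besselK ν x / x ≤ J - besselK ν x := by
      rw [div_le_iff₀ hx]; linarith
    have h7 : (1 + (ν + 1 / 2) / x) * besselK ν x = besselK ν x + ν / x * besselK ν x + 1 / 2 * besselK ν x / x := by
      field_simp; ring
    linarith
  · have h2 : Continuous (fun t : ℝ => Real.sinh t / (1 + Real.cosh t)) :=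
      Real.continuous_sinh.div (by fun_prop) fun t => (hc1 t).ne'
    exact Continuous.continuousWithinAt (by fun_prop)
  · intro t _
    have h1 : HasDerivAt (fun t => Real.exp (-x * Real.cosh t)) _ t := ((Real.hasDerivAt_cosh t).const_mul (-x)).exp
    have h2 : HasDerivAt (fun t => Real.cosh (ν * t)) _ t := ((hasDerivAt_id t).const_mul ν).cosh
    have h3 : HasDerivAt (fun t => Real.sinh t / (1 + Real.cosh t)) _ t :=
      (Real.hasDerivAt_sinh t).div ((Real.hasDerivAt_cosh t).const_add 1) (hc1 t).ne'
    refine (h1.mul (h3.mul h2)).congr_deriv ?_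
    simp only [id, Pi.mul_apply]
    have h9 := (hc1 t).ne'
    have hsq := Real.cosh_sq t
    field_simp
    have hs : Real.sinh t ^ 2 = Real.cosh t ^ 2 - 1 := by linarith
    ring_nf
    simp only [hs]
    ring
  · exact (i1.add (i2.const_mul _)).sub (((bK_int_coshcosh hx ν).sub (bK_int_cosh hx ν)).const_mul _)
  · refine bK_tendsto hx |ν| ?_
    intro t ht
    rw [abs_mul]
    exact (mul_le_of_le_one_left (abs_nonneg _) (hT t)).trans (abs_cosh_le ν ht)
/-- The Wronskian bound. -/
theorem bessel_wronskian {ν : ℝ} (hν : -(1/2) < ν) {x : ℝ} (hx : 0 < x) :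
    x * (besselI ν x * besselK (ν + 1) x + besselI (ν + 1) x * besselK ν x) ≤ 1 := by
  have hν1 : -1 < ν := by linarith
  have hμ : 0 < ν + 1 := by linarith
  set W : ℝ → ℝ := fun y => y * (besselI ν y * besselK (ν + 1) y + besselI (ν + 1) y * besselK ν y) with hW
  have hder : ∀ y ∈ Ioi (0 : ℝ), HasDerivAt W 0 y := by
    intro y hy
    have hy0 : (y : ℝ) ≠ 0 := ne_of_gt hy
    have h := (hasDerivAt_id y).mul
      (((besselI_hasDerivAt hν1 hy).mul (besselK_hasDerivAt' hy ν)).add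
        ((besselI_hasDerivAt' hν1 hy).mul (besselK_hasDerivAt hy ν)))
    refine h.congr_deriv ?_
    simp only [id, Pi.mul_apply, Pi.add_apply]
    field_simp
    ring
  have hconst : ∀ y ∈ Ioi (0 : ℝ), W x = W y := by
    intro y hy
    exact isOpen_Ioi.is_const_of_deriv_eq_zero isPreconnected_Ioi
      (fun z hz => (hder z hz).differentiableAt.differentiableWithinAt)
      (fun z hz => (hder z hz).deriv) hx hy
  set U : ℝ → ℝ := fun y => (bA ν ((y / 2) ^ 2) + y / 2 * bA (ν + 1) ((y / 2) ^ 2)) *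
    (Real.Gamma (ν + 1) + (1 / 2 : ℝ) ^ ν * (1 / (2 * (ν + 1))) * y ^ (ν + 1)) with hU
  have hle : ∀ y ∈ Ioi (0 : ℝ), W y ≤ U y := by
    intro y hy
    have hy0 : 0 < y := hy
    have e1 := besselK_upper hy0 hμ
    have e2 := besselK_mono hν hy0
    have a1 := besselI_nonneg hν1 hy0
    have a2 := besselI_nonneg (ν := ν + 1) (by linarith) hy0
    calc W y ≤ y * (besselI ν y + besselI (ν + 1) y) * besselK (ν + 1) y := by
          simp only [hW]
          have := mul_le_mul_of_nonneg_left e2 a2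
          have := mul_le_mul_of_nonneg_left this hy0.le
          nlinarith
      _ ≤ y * (besselI ν y + besselI (ν + 1) y) *
          ((1 / 2) * ((2 / y) ^ (ν + 1) * Real.Gamma (ν + 1)) + 1 / (2 * (ν + 1))) := by
          gcongr
      _ = U y := by
          rw [besselI_eq ν hy0, besselI_eq (ν + 1) hy0]
          simp only [hU]
          have f1 : (2 / y) ^ (ν + 1) = ((y / 2) ^ (ν + 1))⁻¹ := by
            rw [← Real.inv_rpow (by positivity)]; congr 1; field_simp
          have f2 : y ^ (ν + 1) = y ^ ν * y := Real.rpow_add_one hy0.ne' _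
          have f3 : (1 / 2 : ℝ) ^ ν * y ^ ν = (y / 2) ^ ν := by
            rw [← Real.mul_rpow (by norm_num) hy0.le]; congr 1; ring
          rw [f1, f2, Real.rpow_add_one (by positivity), ← f3]
          have p1 : (0 : ℝ) < (1 / 2 : ℝ) ^ ν := by positivity
          have p2 : (0 : ℝ) < y ^ ν := by positivity
          field_simp
  have hlim : Tendsto U (𝓝[>] 0) (𝓝 1) := by
    have hc : Continuous U := by
      have h1 := bA_continuous hν1
      have h2 := bA_continuous (ν := ν + 1) (by linarith)
      have h3 : Continuous (fun t : ℝ => t ^ (ν + 1)) := Real.continuous_rpow_const hμ.le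
      simp only [hU]
      fun_prop
    have h0 : U 0 = 1 := by
      have := (Real.Gamma_pos_of_pos hμ).ne'
      simp only [hU]
      rw [Real.zero_rpow hμ.ne']
      simp [bA_zero, this]
    have := (hc.tendsto 0).mono_left (nhdsWithin_le_nhds (s := Ioi (0 : ℝ)))
    rwa [h0] at this
  refine ge_of_tendsto hlim ?_
  filter_upwards [self_mem_nhdsWithin] with y hy
  exact (hconst y hy).le.trans (hle y hy)

theorem besselI_ratio {ν : ℝ} (hν : 1 / 2 ≤ ν) {x : ℝ} (hx : 0 < x) :
    (1 - (ν + 1 / 2) / x) * besselI ν x ≤ besselI (ν + 1) x := by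
  have hν1 : -1 < ν := by linarith
  set D : ℝ → ℝ := fun y => Real.exp y * (y ^ (1 / 2 : ℝ) *
    (besselI (ν + 1) y - (1 - (ν + 1 / 2) / y) * besselI ν y)) with hD
  have hder : ∀ y ∈ Ioi (0 : ℝ), HasDerivAt D (Real.exp y * (y ^ (1 / 2 : ℝ) *
      (besselI ν y * ((ν + 1 / 2) * (ν - 1 / 2) / y ^ 2)))) y := by
    intro y hy
    have hy0 : 0 < y := hy
    have h1 : HasDerivAt (fun y : ℝ => 1 - (ν + 1 / 2) / y) _ y :=
      ((hasDerivAt_const y (ν + 1 / 2)).div (hasDerivAt_id y) hy0.ne').const_sub 1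
    have h2 : HasDerivAt (fun y : ℝ => y ^ (1 / 2 : ℝ)) _ y := Real.hasDerivAt_rpow_const (Or.inl hy0.ne')
    have h := (Real.hasDerivAt_exp y).mul (h2.mul
      ((besselI_hasDerivAt' hν1 hy0).sub (h1.mul (besselI_hasDerivAt hν1 hy0))))
    refine h.congr_deriv ?_
    simp only [id, Pi.mul_apply, Pi.sub_apply]
    rw [Real.rpow_sub_one hy0.ne']
    field_simp
    ring
  have hmono : MonotoneOn D (Ioi 0) := by
    refine monotoneOn_of_deriv_nonneg (convex_Ioi 0) (fun y hy => (hder y hy).continuousAt.continuousWithinAt) ?_ ?_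
    · rw [interior_Ioi]
      exact fun y hy => (hder y hy).differentiableAt.differentiableWithinAt
    · rw [interior_Ioi]
      intro y hy
      have hy0 : 0 < y := hy
      rw [(hder y hy).deriv]
      have := besselI_nonneg hν1 hy0
      have : 0 ≤ ν - 1 / 2 := by linarith
      have : 0 ≤ ν := by linarith
      positivity
  set y := min x (ν + 1 / 2) with hy
  have hy0 : 0 < y := lt_min hx (by linarith)
  have h1 : 0 ≤ D y := by
    have a1 := besselI_nonneg hν1 hy0
    have a2 := besselI_nonneg (ν := ν + 1) (by linarith) hy0
    have a3 : 1 - (ν + 1 / 2) / y ≤ 0 := by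
      have : 1 ≤ (ν + 1 / 2) / y := by rw [le_div_iff₀ hy0, one_mul]; exact min_le_right _ _
      linarith
    have a4 := mul_nonpos_of_nonpos_of_nonneg a3 a1
    simp only [hD]
    have : 0 ≤ besselI (ν + 1) y - (1 - (ν + 1 / 2) / y) * besselI ν y := by linarith
    positivity
  have h2 : 0 ≤ D x := h1.trans (hmono hy0 hx (min_le_left _ _))
  simp only [hD] at h2
  have h3 := nonneg_of_mul_nonneg_right h2 (Real.exp_pos x)
  have h4 := nonneg_of_mul_nonneg_right h3 (Real.rpow_pos_of_pos hx _)
  linarith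

theorem besselIK_le {ν : ℝ} (hν : 1 / 2 ≤ ν) {x : ℝ} (hx : 0 < x) :
    x * (besselI ν x * besselK ν x) ≤ 1 / 2 := by
  have hν1 : -1 < ν := by linarith
  have w := bessel_wronskian (ν := ν) (by linarith) hx
  have a1 := mul_le_mul_of_nonneg_left (besselK_ratio hν hx) (besselI_nonneg hν1 hx)
  have a2 := mul_le_mul_of_nonneg_right (besselI_ratio hν hx) (besselK_nonneg ν x)
  have a3 := mul_le_mul_of_nonneg_left (add_le_add a1 a2) hx.le
  have e : x * (besselI ν x * ((1 + (ν + 1 / 2) / x) * besselK ν x) +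
     (1 - (ν + 1 / 2) / x) * besselI ν x * besselK ν x) = 2 * (x * (besselI ν x * besselK ν x)) := by ring
  linarith

/-- Case `ν ≥ 1/2`. -/
theorem int_bound_large {β ν : ℝ} (hβ0 : -1 < β) (hν : 1 / 2 ≤ ν) {x : ℝ} (hx : 0 < x)
    (hInt : IntervalIntegrable (fun t => Real.exp (β * t) * t ^ ν * besselI ν t) volume 0 x) :
    (1 + β) * ∫ t in (0 : ℝ)..x, Real.exp (β * t) * t ^ ν * besselI ν t ≤
      Real.exp (β * x) * (x ^ ν * besselI ν x) := by
  have hν1 : -1 < ν := by linarith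
  rw [← intervalIntegral.integral_const_mul]
  have h := intervalIntegral.integral_le_sub_of_hasDeriv_right_of_le (a := 0) (b := x)
    (g := fun t => Real.exp (β * t) * (t ^ ν * besselI ν t))
    (g' := fun t => Real.exp (β * t) * (t ^ ν * (β * besselI ν t + (besselI (ν + 1) t + 2 * ν / t * besselI ν t))))
    (φ := fun t => (1 + β) * (Real.exp (β * t) * t ^ ν * besselI ν t)) hx.le ?_ ?_ ?_ ?_
  · rw [Real.zero_rpow (by linarith)] at h
    simpa using h
  · exact ContinuousOn.mul (by fun_prop) (besselI_rpow_continuousOn hν1 (by linarith) (by linarith) x)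
  · intro t ht
    have ht0 : 0 < t := ht.1
    have h1 : HasDerivAt (fun t : ℝ => Real.exp (β * t)) _ t := ((hasDerivAt_id t).const_mul β).exp
    have h2 : HasDerivAt (fun y : ℝ => y ^ ν) _ t := Real.hasDerivAt_rpow_const (Or.inl ht0.ne')
    refine ((h1.mul (h2.mul (besselI_hasDerivAt hν1 ht0))).congr_deriv ?_).hasDerivWithinAt
    simp only [id, Pi.mul_apply]
    rw [Real.rpow_sub_one ht0.ne']
    field_simp
    ring
  · rw [integrableOn_Icc_iff_integrableOn_Ioc]
    exact (((intervalIntegrable_iff_integrableOn_Ioc_of_le hx.le).1 hInt)).const_mul _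
  · intro t ht
    have ht0 : 0 < t := ht.1
    have a1 := besselI_nonneg hν1 ht0
    have a2 := besselI_ratio hν ht0
    have a3 : (ν + 1 / 2) / t * besselI ν t ≤ 2 * ν / t * besselI ν t := by
      gcongr
      linarith
    have a4 : (1 + β) * besselI ν t ≤ β * besselI ν t + (besselI (ν + 1) t + 2 * ν / t * besselI ν t) := by
      linarith
    have p : 0 ≤ Real.exp (β * t) * t ^ ν := by positivity
    have := mul_le_mul_of_nonneg_left a4 p
    calc _ = Real.exp (β * t) * t ^ ν * ((1 + β) * besselI ν t) := by ring
      _ ≤ _ := this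
      _ = _ := by ring

/-- Case `ν` small. -/
theorem int_bound_small {β ν : ℝ} (hβ0 : -1 < β) (hν : -(1/2) < ν) {x : ℝ} (hx : 0 < x)
    (hInt : IntervalIntegrable (fun t => Real.exp (β * t) * t ^ ν * besselI ν t) volume 0 x) :
    ((1 + β) * x) * ∫ t in (0 : ℝ)..x, Real.exp (β * t) * t ^ ν * besselI ν t ≤
      Real.exp (β * x) * (1 + 1 / (2 * ν + 1)) * (x ^ (ν + 1) * (besselI ν x + besselI (ν + 1) x)) := by
  have hν1 : -1 < ν := by linarith
  have hε : 0 < 2 * ν + 1 := by linarith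
  have hs : 0 < 1 + β := by linarith
  rw [← intervalIntegral.integral_const_mul]
  have h := intervalIntegral.integral_le_sub_of_hasDeriv_right_of_le (a := 0) (b := x)
    (g := fun t => (Real.exp (β * t) + Real.exp ((1 + β) * x) * Real.exp (-t) / (2 * ν + 1)) *
      (t ^ (ν + 1) * besselI ν t + t ^ (ν + 1) * besselI (ν + 1) t))
    (g' := fun t => (1 + β) * Real.exp (β * t) * (t ^ (ν + 1) * (besselI ν t + besselI (ν + 1) t)) +
      (Real.exp (β * t) * (2 * ν + 1) + Real.exp ((1 + β) * x) * Real.exp (-t)) * (t ^ ν * besselI ν t))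
    (φ := fun t => ((1 + β) * x) * (Real.exp (β * t) * t ^ ν * besselI ν t)) hx.le ?_ ?_ ?_ ?_
  · refine h.trans (le_of_eq ?_)
    rw [Real.zero_rpow (by linarith)]
    have e : Real.exp ((1 + β) * x) * Real.exp (-x) = Real.exp (β * x) := by
      rw [← Real.exp_add]; congr 1; ring
    rw [e]
    field_simp
    ring
  · refine ContinuousOn.mul (by fun_prop) (ContinuousOn.add ?_ ?_)
    · exact besselI_rpow_continuousOn hν1 (by linarith) (by linarith) x
    · exact besselI_rpow_continuousOn (by linarith) (by linarith) (by linarith) x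
  · intro t ht
    have ht0 : 0 < t := ht.1
    have h1 : HasDerivAt (fun t : ℝ => Real.exp (β * t)) _ t := ((hasDerivAt_id t).const_mul β).exp
    have h1' : HasDerivAt (fun t : ℝ => Real.exp ((1 + β) * x) * Real.exp (-t) / (2 * ν + 1)) _ t :=
      (((hasDerivAt_id t).neg.exp).const_mul _).div_const _
    have h2 : HasDerivAt (fun y : ℝ => y ^ (ν + 1)) _ t := Real.hasDerivAt_rpow_const (Or.inl ht0.ne')
    refine (((h1.add h1').mul ((h2.mul (besselI_hasDerivAt hν1 ht0)).add
      (h2.mul (besselI_hasDerivAt' hν1 ht0)))).congr_deriv ?_).hasDerivWithinAt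
    simp only [id, Pi.mul_apply, Pi.add_apply, Pi.neg_apply]
    rw [add_sub_cancel_right, Real.rpow_add_one ht0.ne']
    field_simp
    ring
  · rw [integrableOn_Icc_iff_integrableOn_Ioc]
    exact (((intervalIntegrable_iff_integrableOn_Ioc_of_le hx.le).1 hInt)).const_mul _
  · intro t ht
    have ht0 : 0 < t := ht.1
    have a1 := besselI_nonneg hν1 ht0
    have a2 := besselI_nonneg (ν := ν + 1) (by linarith) ht0
    have hm : 0 ≤ t ^ ν * besselI ν t := by positivity
    have e : Real.exp ((1 + β) * x) * Real.exp (-t) = Real.exp ((1 + β) * (x - t)) * Real.exp (β * t) := by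
      rw [← Real.exp_add, ← Real.exp_add]; congr 1; ring
    have e2 : (1 + β) * (x - t) ≤ Real.exp ((1 + β) * (x - t)) := by
      have := Real.add_one_le_exp ((1 + β) * (x - t)); linarith
    have b1 : (1 + β) * (x - t) * (Real.exp (β * t) * (t ^ ν * besselI ν t)) ≤
        Real.exp ((1 + β) * (x - t)) * (Real.exp (β * t) * (t ^ ν * besselI ν t)) := by
      gcongr
    have b2 : (1 + β) * Real.exp (β * t) * (t ^ (ν + 1) * besselI ν t) ≤
       (1 + β) * Real.exp (β * t) * (t ^ (ν + 1) * (besselI ν t + besselI (ν + 1) t)) := by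
      gcongr
      linarith
    have b3 : 0 ≤ Real.exp (β * t) * (2 * ν + 1) * (t ^ ν * besselI ν t) := by positivity
    have e3 : t ^ (ν + 1) = t ^ ν * t := Real.rpow_add_one ht0.ne' _
    rw [e]
    calc (1 + β) * x * (Real.exp (β * t) * t ^ ν * besselI ν t)
        = (1 + β) * Real.exp (β * t) * (t ^ (ν + 1) * besselI ν t) +
          (1 + β) * (x - t) * (Real.exp (β * t) * (t ^ ν * besselI ν t)) := by rw [e3]; ring
      _ ≤ _ := by linarith

end Helpers


theorem stmt_15 (β ν : ℝ) (hβ0 : -1 < β) (hβ1 : β < 0) (hν : -(1/2) < ν) (x : ℝ) (hx : 0 < x) :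
    (Real.exp (-β * x) * besselK ν x / x ^ (ν - 1)) *
        ∫ t in (0 : ℝ)..x, Real.exp (β * t) * t ^ ν * besselI ν t <
      (2 * ν + 7) / (2 * (2 * ν + 1) * (1 + β)) := by
  have hε : 0 < 2 * ν + 1 := by linarith
  have hs : 0 < 1 + β := by linarith
  have hK := besselK_nonneg ν x
  have hν1 : -1 < ν := by linarith
  have hI := besselI_nonneg hν1 hx
  have hI1 := besselI_nonneg (ν := ν + 1) (by linarith) hx
  by_cases hInt : IntervalIntegrable (fun t => Real.exp (β * t) * t ^ ν * besselI ν t) volume 0 x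
  swap
  · rw [intervalIntegral.integral_undef hInt, mul_zero]
    have : 0 < 2 * ν + 7 := by linarith
    positivity
  set F := ∫ t in (0 : ℝ)..x, Real.exp (β * t) * t ^ ν * besselI ν t with hF
  have hE : Real.exp (-β * x) * Real.exp (β * x) = 1 := by
    rw [← Real.exp_add]; simp
  have hp : 0 < x ^ ν := Real.rpow_pos_of_pos hx _
  have hpre : Real.exp (-β * x) * besselK ν x / x ^ (ν - 1) = Real.exp (-β * x) * besselK ν x * x / x ^ ν := by
    rw [Real.rpow_sub_one hx.ne']; field_simp
  rw [hpre, lt_div_iff₀ (by positivity)]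
  rcases le_or_gt (1 / 2) ν with h | h
  · have h1 := int_bound_large hβ0 h hx hInt
    have h2 := besselIK_le h hx
    have h3 : Real.exp (-β * x) * besselK ν x * x / x ^ ν * F * (1 + β) ≤ x * (besselI ν x * besselK ν x) := by
      calc _ = Real.exp (-β * x) * besselK ν x * x / x ^ ν * ((1 + β) * F) := by ring
        _ ≤ Real.exp (-β * x) * besselK ν x * x / x ^ ν * (Real.exp (β * x) * (x ^ ν * besselI ν x)) := by gcongr
        _ = (Real.exp (-β * x) * Real.exp (β * x)) * (x * (besselI ν x * besselK ν x)) := by field_simp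
        _ = _ := by rw [hE, one_mul]
    nlinarith
  · have h1 := int_bound_small hβ0 hν hx hInt
    have h2 := bessel_wronskian hν hx
    have h2' : x * ((besselI ν x + besselI (ν + 1) x) * besselK ν x) ≤ 1 := by
      refine le_trans ?_ h2
      have := mul_le_mul_of_nonneg_left (besselK_mono hν hx) hI
      have := mul_le_mul_of_nonneg_left this hx.le
      linarith
    have h3 : Real.exp (-β * x) * besselK ν x * x / x ^ ν * F * (1 + β) ≤ 1 + 1 / (2 * ν + 1) := by
      calc _ = Real.exp (-β * x) * besselK ν x / x ^ ν * ((1 + β) * x * F) := by ring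
        _ ≤ Real.exp (-β * x) * besselK ν x / x ^ ν * (Real.exp (β * x) * (1 + 1 / (2 * ν + 1)) *
            (x ^ (ν + 1) * (besselI ν x + besselI (ν + 1) x))) := by gcongr
        _ = (Real.exp (-β * x) * Real.exp (β * x)) * (1 + 1 / (2 * ν + 1)) *
            (x * ((besselI ν x + besselI (ν + 1) x) * besselK ν x)) := by
            rw [Real.rpow_add_one hx.ne']; field_simp
        _ ≤ (Real.exp (-β * x) * Real.exp (β * x)) * (1 + 1 / (2 * ν + 1)) * 1 := by gcongr
        _ = _ := by rw [hE]; ring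
    have h4 := mul_le_mul_of_nonneg_right h3 hε.le
    have h5 : (1 + 1 / (2 * ν + 1)) * (2 * ν + 1) = 2 * ν + 2 := by field_simp; ring
    nlinarith
end
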